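/- arXiv:2601.07066 — 15 statements merged into one kernel-verified Lean document; each statement's English description precedes it below -/
import Mathlib

section
/- Let K be a field of characteristic zero, let n ≥ 1, and let A be an associative (not necessarily unital) K-algebra satisfying the identities x(xy − yx) = 0 for all x, y ∈ A and xⁿ = 0 for all x ∈ A. Then every product of n + 1 elements of A is zero, i.e. x₁x₂⋯x₊₁ = 0 for all x₁, …, x₊₁ ∈ A. -/
/-- `powSucc x n` is the power `x ^ (n + 1)` in a (possibly non-unital) multiplicative
structure: `powSucc x 0 = x` and `powSucc x (n + 1) = powSucc x n * x`. -/
def powSucc {A : Type*} [Mul A] (x : A) : ℕ → A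
  | 0 => x
  | n + 1 => powSucc x n * x

/-!
The bracket `⁅y, z⁆` is `y * z - z * y`. Linearizing `x * ⁅x, y⁆ = 0` makes `x * ⁅y, z⁆`
alternating. Computing `x * ⁅y, z * w⁆` in two ways then shows that `x * y * ⁅z, w⁆` is alternating
and that `x * ⁅y, z⁆ * w` is twice it. The standard polynomial
`y * ⁅z, w⁆ + z * ⁅w, y⁆ + w * ⁅y, z⁆ = ⁅z, w⁆ * y + ⁅w, y⁆ * z + ⁅y, z⁆ * w`, multiplied by `x` on
the left, is therefore both three times and six times `x * y * ⁅z, w⁆`. Without 3-torsion, products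
of at least four elements are thus symmetric in all factors but the first, and polarizing
`x * y ^ n = 0` in `y` yields `n ! • (x * y₁ * ⋯ * yₙ) = 0` for `3 ≤ n`. In the case `n = 2` the
algebra is anticommutative, whence `2 • (x * y * z) = 0`.
-/

open scoped Nat

section CommutatorIdentity

variable {A : Type*} [NonUnitalRing A]

theorem mul_lie_swap (h : ∀ x y : A, x * ⁅x, y⁆ = 0) (x y z : A) :
    x * ⁅y, z⁆ = -(y * ⁅x, z⁆) := by
  have linearized : x * ⁅y, z⁆ + y * ⁅x, z⁆ = (x + y) * ⁅x + y, z⁆ - x * ⁅x, z⁆ - y * ⁅y, z⁆ := by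
    simp only [Ring.lie_def]
    noncomm_ring
  rw [h, h, h, sub_zero, sub_zero] at linearized
  exact eq_neg_of_add_eq_zero_left linearized

theorem mul_lie_rotate (h : ∀ x y : A, x * ⁅x, y⁆ = 0) (x y z : A) :
    x * ⁅y, z⁆ = y * ⁅z, x⁆ := by
  rw [mul_lie_swap h, ← mul_neg, Ring.lie_def, Ring.lie_def, neg_sub]

theorem mul_mul_lie_rotate (h : ∀ x y : A, x * ⁅x, y⁆ = 0) (x y z w : A) :
    x * y * ⁅z, w⁆ = x * z * ⁅w, y⁆ := by
  rw [mul_assoc, mul_lie_rotate h, mul_assoc]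

theorem mul_lie_mul_eq_add (h : ∀ x y : A, x * ⁅x, y⁆ = 0) (x y z w : A) :
    x * ⁅y, z⁆ * w = z * w * ⁅x, y⁆ + x * y * ⁅z, w⁆ := by
  have leibniz : x * ⁅y, z * w⁆ = x * ⁅y, z⁆ * w - x * z * ⁅w, y⁆ := by
    simp only [Ring.lie_def]
    noncomm_ring
  have cyclic : x * ⁅y, z * w⁆ = z * w * ⁅x, y⁆ :=
    (mul_lie_rotate h _ _ _).trans (mul_lie_rotate h _ _ _)
  rw [← cyclic, leibniz, mul_mul_lie_rotate h x y z w, sub_add_cancel]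

theorem mul_mul_lie_swap (h : ∀ x y : A, x * ⁅x, y⁆ = 0) (x y z w : A) :
    x * y * ⁅z, w⁆ = -(z * y * ⁅x, w⁆) := by
  have alternating (a b c : A) : a * b * ⁅a, c⁆ = 0 := by
    have := mul_lie_mul_eq_add h a a c b
    rwa [h, zero_mul, Ring.lie_def a a, sub_self, mul_zero, zero_add, mul_mul_lie_rotate h,
      mul_mul_lie_rotate h, eq_comm] at this
  have linearized : x * y * ⁅z, w⁆ + z * y * ⁅x, w⁆ =
      (x + z) * y * ⁅x + z, w⁆ - x * y * ⁅x, w⁆ - z * y * ⁅z, w⁆ := by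
    simp only [Ring.lie_def]
    noncomm_ring
  rw [alternating, alternating, alternating, sub_zero, sub_zero] at linearized
  exact eq_neg_of_add_eq_zero_left linearized

theorem mul_lie_mul_eq_two_nsmul (h : ∀ x y : A, x * ⁅x, y⁆ = 0) (x y z w : A) :
    x * ⁅y, z⁆ * w = 2 • (x * y * ⁅z, w⁆) := by
  have even : z * w * ⁅x, y⁆ = x * y * ⁅z, w⁆ :=
    calc z * w * ⁅x, y⁆ = -(x * w * ⁅z, y⁆) := mul_mul_lie_swap h z w x y
      _ = x * w * ⁅y, z⁆ := by rw [Ring.lie_def, Ring.lie_def, ← mul_neg, neg_sub]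
      _ = x * y * ⁅z, w⁆ := mul_mul_lie_rotate h x w y z
  rw [mul_lie_mul_eq_add h, even, two_nsmul]

theorem mul_mul_lie_eq_zero (h : ∀ x y : A, x * ⁅x, y⁆ = 0) (h3 : IsSMulRegular A 3)
    (x y z w : A) : x * y * ⁅z, w⁆ = 0 := by
  have standard : x * y * ⁅z, w⁆ + x * z * ⁅w, y⁆ + x * w * ⁅y, z⁆ =
      x * ⁅z, w⁆ * y + x * ⁅w, y⁆ * z + x * ⁅y, z⁆ * w := by
    simp only [Ring.lie_def]
    noncomm_ring
  simp only [mul_lie_mul_eq_two_nsmul h, ← mul_mul_lie_rotate h x y z w,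
    mul_mul_lie_rotate h x w y z] at standard
  refine h3.right_eq_zero_of_smul ?_
  set c := x * y * ⁅z, w⁆
  calc 3 • c = 2 • c + 2 • c + 2 • c - (c + c + c) := by abel
    _ = 0 := by rw [standard, sub_self]

theorem mul_mul_mul_swap_right (h : ∀ x y : A, x * ⁅x, y⁆ = 0) (h3 : IsSMulRegular A 3)
    (x y z w : A) : x * y * z * w = x * y * w * z := by
  have := mul_mul_lie_eq_zero h h3 x y z w
  rwa [Ring.lie_def, mul_sub, ← mul_assoc, ← mul_assoc, sub_eq_zero] at this

theorem mul_mul_mul_swap_middle (h : ∀ x y : A, x * ⁅x, y⁆ = 0) (h3 : IsSMulRegular A 3)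
    (x y z w : A) : x * y * z * w = x * z * y * w := by
  have := mul_lie_mul_eq_two_nsmul h x y z w
  rwa [mul_mul_lie_eq_zero h h3, smul_zero, Ring.lie_def, mul_sub, sub_mul, ← mul_assoc,
    ← mul_assoc, sub_eq_zero] at this

end CommutatorIdentity

theorem mul_mul_eq_zero_of_forall_mul_self_eq_zero {A : Type*} [NonUnitalRing A]
    (h2 : IsSMulRegular A 2) (hsq : ∀ a : A, a * a = 0) (x y z : A) : x * y * z = 0 := by
  have anticomm (a b : A) : a * b = -(b * a) := by
    have := hsq (a + b)
    rw [add_mul, mul_add, mul_add, hsq, hsq, zero_add, add_zero] at this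
    exact eq_neg_of_add_eq_zero_left this
  have self_eq_neg : x * y * z = -(x * y * z) :=
    calc x * y * z = -(z * x * y) := by rw [anticomm, mul_assoc]
      _ = x * (z * y) := by rw [anticomm z x, neg_mul, neg_neg, mul_assoc]
      _ = -(x * y * z) := by rw [anticomm z y, mul_neg, mul_assoc]
  refine h2.right_eq_zero_of_smul ?_
  rw [two_nsmul, ← eq_neg_iff_add_eq_zero]
  exact self_eq_neg

section Perm

variable {M : Type*} [Mul M]

theorem foldl_mul_mul_eq_of_perm (hright : ∀ a b c d : M, a * b * c * d = a * b * d * c)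
    {l l' : List M} (hperm : l.Perm l') (x y : M) :
    l.foldl (· * ·) (x * y) = l'.foldl (· * ·) (x * y) := by
  induction hperm generalizing x y with
  | nil => rfl
  | cons a _ ih => exact ih (x * y) a
  | swap a b l => simp only [List.foldl_cons, hright x y b a]
  | trans _ _ ih ih' => exact (ih x y).trans (ih' x y)

theorem foldl_mul_eq_of_perm (hmid : ∀ a b c d : M, a * b * c * d = a * c * b * d)
    (hright : ∀ a b c d : M, a * b * c * d = a * b * d * c) {l l' : List M} (hperm : l.Perm l')
    (hl : 3 ≤ l.length) (x : M) : l.foldl (· * ·) x = l'.foldl (· * ·) x := by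
  induction hperm with
  | nil => rfl
  | cons a h _ => exact foldl_mul_mul_eq_of_perm hright h x a
  | swap a b l =>
    obtain ⟨c, l, rfl⟩ := List.exists_cons_of_length_pos (Nat.le_of_add_le_add_right (b := 2) hl)
    simp only [List.foldl_cons, hmid x b a c]
  | trans h _ ih ih' => exact (ih hl).trans (ih' (h.length_eq ▸ hl))

end Perm

theorem foldl_mul_replicate {S : Type*} [Semigroup S] (x y : S) (n : ℕ) :
    (List.replicate (n + 1) y).foldl (· * ·) x = x * powSucc y n := by
  induction n with
  | zero => rfl
  | succ n ih =>
    rw [List.replicate_succ', List.foldl_append, ih, List.foldl_cons, List.foldl_nil, mul_assoc,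
      powSucc]

section Polarization

open Finset Equiv

variable {ι : Type*} [Fintype ι]

theorem sum_neg_one_pow_card_of_avoids_range [DecidableEq ι] (r : ι → ι) [Decidable r.Bijective] :
    ∑ T : Finset ι with ∀ i, r i ∉ T, (-1 : ℤ) ^ #T = if r.Bijective then 1 else 0 := by
  have avoiding_eq_powerset :
      ({T | ∀ i, r i ∉ T} : Finset (Finset ι)) = (univ.image r)ᶜ.powerset := by
    ext T
    rw [mem_filter_univ, mem_powerset, subset_compl_comm, image_subset_iff]
    simp only [mem_univ, mem_compl, forall_const]
  have compl_eq_empty_iff_bijective : (univ.image r)ᶜ = ∅ ↔ r.Bijective := by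
    rw [compl_eq_empty_iff, ← coe_eq_univ, coe_image, coe_univ, Set.image_univ,
      Set.range_eq_univ, Finite.surjective_iff_bijective]
  simp only [avoiding_eq_powerset, sum_powerset_neg_one_pow_card, compl_eq_empty_iff_bijective]

variable {R V W : Type*} [Semiring R] [AddCommMonoid V] [Module R V] [AddCommGroup W] [Module R W]

theorem sum_perm_map_eq_sum_neg_one_pow_smul_map_sum [DecidableEq ι]
    (f : MultilinearMap R (fun _ : ι ↦ V) W) (y : ι → V) :
    ∑ σ : Perm ι, f (fun i ↦ y (σ i)) =
      ∑ T : Finset ι, (-1 : ℤ) ^ #T • f (fun _ ↦ ∑ i ∈ Tᶜ, y i) := by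
  classical
  symm
  calc ∑ T : Finset ι, (-1 : ℤ) ^ #T • f (fun _ ↦ ∑ i ∈ Tᶜ, y i)
    _ = ∑ T : Finset ι, ∑ r : ι → ι with ∀ i, r i ∉ T, (-1 : ℤ) ^ #T • f (fun i ↦ y (r i)) := by
      refine sum_congr rfl fun T _ ↦ ?_
      rw [f.map_sum_finset, smul_sum]
      refine sum_congr ?_ fun _ _ ↦ rfl
      ext r
      simp
    _ = ∑ r : ι → ι, ∑ T : Finset ι with ∀ i, r i ∉ T, (-1 : ℤ) ^ #T • f (fun i ↦ y (r i)) :=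
      sum_comm' (by simp)
    _ = ∑ r : ι → ι with r.Bijective, f (fun i ↦ y (r i)) := by
      simp only [← sum_smul, sum_neg_one_pow_card_of_avoids_range, ite_smul, one_smul, zero_smul]
      rw [sum_filter]
    _ = ∑ σ : Perm ι, f (fun i ↦ y (σ i)) :=
      sum_bij' (fun r hr ↦ ofBijective r (mem_filter.1 hr).2) (fun σ _ ↦ σ)
        (fun _ _ ↦ mem_univ _) (fun σ _ ↦ by simp)
        (fun _ _ ↦ rfl) (fun _ _ ↦ ext fun _ ↦ rfl) fun _ _ ↦ rfl

theorem factorial_card_nsmul_map_eq_zero (f : MultilinearMap R (fun _ : ι ↦ V) W) (y : ι → V)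
    (hsymm : ∀ σ : Perm ι, f (fun i ↦ y (σ i)) = f y) (hdiag : ∀ v, f (fun _ ↦ v) = 0) :
    (Fintype.card ι)! • f y = 0 := by
  classical
  have polarization := sum_perm_map_eq_sum_neg_one_pow_smul_map_sum f y
  simpa only [hsymm, hdiag, smul_zero, sum_const_zero, sum_const, card_univ,
    Fintype.card_perm] using polarization

end Polarization

section FoldlMul

variable (R : Type*) {A : Type*} [CommSemiring R] [NonUnitalNonAssocSemiring A] [Module R A]
  [SMulCommClass R A A] [IsScalarTower R A A]

/-- The product `x * y₀ * ⋯ * yₙ₋₁`, bracketed to the left, as a multilinear map in `y`. -/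
def foldlMul (x : A) : (n : ℕ) → MultilinearMap R (fun _ : Fin n ↦ A) A
  | 0 => MultilinearMap.constOfIsEmpty R _ x
  | n + 1 => ((LinearMap.mul R A).compMultilinearMap (foldlMul x n)).uncurryRight

theorem foldlMul_apply (x : A) (n : ℕ) (y : Fin n → A) :
    foldlMul R x n y = (List.ofFn y).foldl (· * ·) x := by
  induction n with
  | zero => simp [foldlMul]
  | succ n ih =>
    rw [List.ofFn_succ', List.concat_eq_append, List.foldl_concat, ← ih]
    rfl

end FoldlMul

theorem factorial_nsmul_foldl_mul_eq_zero {A : Type*} [NonUnitalRing A] {n : ℕ} {x : A}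
    (hpow : ∀ y : A, x * powSucc y n = 0) {l : List A} (hl : l.length = n + 1)
    (hsymm : ∀ l' : List A, l'.Perm l → l'.foldl (· * ·) x = l.foldl (· * ·) x) :
    (n + 1)! • l.foldl (· * ·) x = 0 := by
  obtain ⟨y, rfl⟩ : ∃ y : Fin (n + 1) → A, List.ofFn y = l :=
    ⟨fun i ↦ l.get (i.cast hl.symm),
      List.ext_getElem (by rw [List.length_ofFn, hl]) fun _ _ _ ↦ by rw [List.getElem_ofFn]; rfl⟩
  have invariant (σ : Equiv.Perm (Fin (n + 1))) :
      foldlMul ℤ x (n + 1) (fun i ↦ y (σ i)) = foldlMul ℤ x (n + 1) y := by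
    rw [foldlMul_apply, foldlMul_apply]
    exact hsymm _ (σ.ofFn_comp_perm y)
  have diagonal (v : A) : foldlMul ℤ x (n + 1) (fun _ ↦ v) = 0 := by
    rw [foldlMul_apply, List.ofFn_const, foldl_mul_replicate, hpow]
  simpa only [Fintype.card_fin, foldlMul_apply] using
    factorial_card_nsmul_map_eq_zero (foldlMul ℤ x (n + 1)) y invariant diagonal

theorem stmt_0_general {A : Type*} [NonUnitalRing A] {n : ℕ} (hreg : IsSMulRegular A (n + 1)!)
    (h1 : ∀ x y : A, x * (x * y - y * x) = 0) (h2 : ∀ x : A, powSucc x n = 0)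
    (x : A) (l : List A) (hl : l.length = n + 1) : l.foldl (· * ·) x = 0 := by
  match n with
  | 0 => exact h2 _
  | 1 =>
    obtain ⟨y, z, rfl⟩ := List.length_eq_two.1 hl
    exact mul_mul_eq_zero_of_forall_mul_self_eq_zero hreg h2 x y z
  | n + 2 =>
    have h3 : IsSMulRegular A 3 := by
      obtain ⟨k, hk⟩ := Nat.dvd_factorial three_pos (Nat.le_add_left 3 n)
      rw [hk, mul_comm] at hreg
      exact hreg.of_mul
    have hsymm (l' : List A) (hperm : l'.Perm l) : l'.foldl (· * ·) x = l.foldl (· * ·) x :=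
      foldl_mul_eq_of_perm (mul_mul_mul_swap_middle h1 h3) (mul_mul_mul_swap_right h1 h3) hperm
        (by rw [hperm.length_eq, hl]; exact Nat.le_add_left 3 n) x
    exact hreg.right_eq_zero_of_smul <|
      factorial_nsmul_foldl_mul_eq_zero (fun y ↦ by rw [h2, mul_zero]) hl hsymm

/-- Let `K` be a field of characteristic zero, `n ≥ 1`, and `A` an associative
(not necessarily unital) `K`-algebra satisfying `x * (x*y - y*x) = 0` and `x^n = 0`.
Then every product of `n + 1` elements of `A` is zero. -/
theorem stmt_0 (K : Type*) [Field K] [CharZero K]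
    (A : Type*) [NonUnitalRing A] [Module K A] [SMulCommClass K A A] [IsScalarTower K A A]
    (n : ℕ) (hn : 1 ≤ n)
    (h1 : ∀ x y : A, x * (x * y - y * x) = 0)
    (h2 : ∀ x : A, powSucc x (n - 1) = 0) :
    ∀ (x : A) (l : List A), l.length = n → l.foldl (· * ·) x = 0 := by
  obtain ⟨m, rfl⟩ := Nat.exists_eq_add_of_le' hn
  have := IsAddTorsionFree.of_isTorsionFree K A
  exact stmt_0_general (nsmul_right_injective (m + 1).factorial_ne_zero) h1 h2
end

section
/- Let K be a field of characteristic zero and let A be an associative (not necessarily unital) K-algebra satisfying x²y = yx² for all x, y ∈ A and x³ = 0 for all x ∈ A. Then every product of four elements of A is zero: x₁x₂x₃x₄ = 0 for all x₁, x₂, x₃, x₄ ∈ A. -/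
/-!
Polarising `x³ = 0` and using that squares are central gives `xyx = -2x²y`, so `x²y` equals
`-(x·xy + xy·x)`, a polarised square, and is itself central. Putting `y²` for `y` in
`x²y + xyx + yx² = 0` then yields `3x²y² = 0`. Polarising in `y` shows that `x²` annihilates all
products of two elements, and polarising in `x` that products of four elements are alternating.
Moving the last factor to the front therefore changes the sign of a product of four elements, so
that `x·yz + yz·x` both commutes and anticommutes with every `w`, while `(x·yz + yz·x)w = 2xyzw`.
-/

section CentralSquares

variable {A : Type*} [NonUnitalRing A]

theorem commute_mul_add_mul_of_commute_mul_self (hsq : ∀ x y : A, Commute (x * x) y) (a b c : A) :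
    Commute (a * b + b * a) c := by
  have polarization : a * b + b * a = (a + b) * (a + b) - a * a - b * b := by
    simp only [mul_add, add_mul]
    abel
  rw [polarization]
  exact ((hsq (a + b) c).sub_left (hsq a c)).sub_left (hsq b c)

theorem mul_self_mul_add_mul_mul_add_mul_mul_self_eq_zero (h₂ : IsSMulRegular A 2)
    (hcube : ∀ x : A, x * x * x = 0) (x y : A) :
    x * x * y + x * y * x + y * (x * x) = 0 := by
  refine h₂.right_eq_zero_of_smul ?_
  calc 2 • (x * x * y + x * y * x + y * (x * x))
      = (x + y) * (x + y) * (x + y) - (x - y) * (x - y) * (x - y) - 2 • (y * y * y) := by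
        simp only [mul_add, add_mul, mul_sub, sub_mul, mul_assoc]
        abel
    _ = 0 := by simp only [hcube, smul_zero, sub_zero]

variable (h₂ : IsSMulRegular A 2) (hsq : ∀ x y : A, Commute (x * x) y)
  (hcube : ∀ x : A, x * x * x = 0)

include h₂ hsq hcube

theorem mul_mul_eq_neg_two_nsmul_mul_self_mul (x y : A) : x * y * x = -(2 • (x * x * y)) := by
  have h := mul_self_mul_add_mul_mul_add_mul_mul_self_eq_zero h₂ hcube x y
  rw [← (hsq x y).eq] at h
  rw [← sub_eq_zero, ← h]
  abel

theorem commute_mul_self_mul (x y z : A) : Commute (x * x * y) z := by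
  have h : x * x * y = -(x * (x * y) + x * y * x) := by
    rw [mul_mul_eq_neg_two_nsmul_mul_self_mul h₂ hsq hcube, mul_assoc]
    abel
  rw [h]
  exact (commute_mul_add_mul_of_commute_mul_self hsq x (x * y) z).neg_left

theorem mul_self_mul_mul_comm (x y z : A) : x * x * (y * z) = x * x * (z * y) := by
  calc x * x * (y * z) = z * (x * x * y) := by
        rw [← mul_assoc, (commute_mul_self_mul h₂ hsq hcube x y z).eq]
    _ = x * x * (z * y) := by rw [← mul_assoc, ← (hsq x z).eq, mul_assoc]

variable (h₃ : IsSMulRegular A 3)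

include h₃

theorem mul_self_mul_mul_self_eq_zero (x y : A) : x * x * (y * y) = 0 := by
  have h := mul_self_mul_add_mul_mul_add_mul_mul_self_eq_zero h₂ hcube x (y * y)
  have middle : x * (y * y) * x = x * x * (y * y) := by
    rw [mul_assoc, (hsq y x).eq, ← mul_assoc]
  rw [middle, (hsq y (x * x)).eq] at h
  refine h₃.right_eq_zero_of_smul ?_
  rw [← h]
  abel

theorem mul_self_mul_mul_eq_zero (x y z : A) : x * x * (y * z) = 0 := by
  have hzero := mul_self_mul_mul_self_eq_zero h₂ hsq hcube h₃ x
  refine h₂.right_eq_zero_of_smul ?_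
  calc 2 • (x * x * (y * z)) = x * x * (y * z) + x * x * (z * y) := by
        rw [two_nsmul, ← mul_self_mul_mul_comm h₂ hsq hcube x y z]
    _ = x * x * ((y + z) * (y + z)) - x * x * (y * y) - x * x * (z * z) := by
        simp only [mul_add, add_mul]
        abel
    _ = 0 := by simp only [hzero, sub_zero]

theorem mul_add_mul_mul_mul_eq_zero (x y z w : A) : (x * y + y * x) * (z * w) = 0 := by
  have hzero (t : A) := mul_self_mul_mul_eq_zero h₂ hsq hcube h₃ t z w
  calc (x * y + y * x) * (z * w)
      = (x + y) * (x + y) * (z * w) - x * x * (z * w) - y * y * (z * w) := by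
        simp only [mul_add, add_mul]
        abel
    _ = 0 := by simp only [hzero, sub_zero]

theorem mul_anticomm_first (x y z w : A) : x * y * z * w = -(y * x * z * w) := by
  have h := mul_add_mul_mul_mul_eq_zero h₂ hsq hcube h₃ x y z w
  rw [eq_neg_iff_add_eq_zero, ← h]
  simp only [add_mul, mul_assoc]

theorem mul_anticomm_middle (x y z w : A) : x * y * z * w = -(x * z * y * w) := by
  have h := mul_add_mul_mul_mul_eq_zero h₂ hsq hcube h₃ y z x w
  rw [← mul_assoc, (commute_mul_add_mul_of_commute_mul_self hsq y z x).eq] at h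
  rw [eq_neg_iff_add_eq_zero, ← h]
  simp only [mul_add, add_mul, mul_assoc]

theorem mul_anticomm_last (x y z w : A) : x * y * z * w = -(x * y * w * z) := by
  have h := mul_add_mul_mul_mul_eq_zero h₂ hsq hcube h₃ z w x y
  rw [(commute_mul_add_mul_of_commute_mul_self hsq z w (x * y)).eq] at h
  rw [eq_neg_iff_add_eq_zero, ← h]
  simp only [mul_add, mul_assoc]

theorem mul_rotate_eq_neg (x y z w : A) : w * x * y * z = -(x * y * z * w) := by
  rw [mul_anticomm_first h₂ hsq hcube h₃ w, mul_anticomm_middle h₂ hsq hcube h₃ x w,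
    mul_anticomm_last h₂ hsq hcube h₃ x y w, neg_neg]

end CentralSquares

theorem stmt_3_general {A : Type*} [NonUnitalRing A]
    (h₂ : IsSMulRegular A 2) (h₃ : IsSMulRegular A 3)
    (hsq : ∀ x y : A, x * x * y = y * (x * x))
    (hcube : ∀ x : A, x * x * x = 0) (x₁ x₂ x₃ x₄ : A) :
    x₁ * x₂ * x₃ * x₄ = 0 := by
  have cycle : x₂ * x₃ * x₁ * x₄ = x₁ * x₂ * x₃ * x₄ := by
    rw [mul_anticomm_middle h₂ hsq hcube h₃ x₂, mul_anticomm_first h₂ hsq hcube h₃ x₂, neg_neg]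
  have central : x₁ * x₂ * x₃ * x₄ + x₂ * x₃ * x₁ * x₄ =
      x₄ * x₁ * x₂ * x₃ + x₄ * x₂ * x₃ * x₁ := by
    have h := (commute_mul_add_mul_of_commute_mul_self hsq x₁ (x₂ * x₃) x₄).eq
    simpa only [mul_add, add_mul, mul_assoc] using h
  rw [mul_rotate_eq_neg h₂ hsq hcube h₃ x₁ x₂ x₃ x₄,
    mul_rotate_eq_neg h₂ hsq hcube h₃ x₂ x₃ x₁ x₄, cycle] at central
  have two_two_nsmul : 2 • 2 • (x₁ * x₂ * x₃ * x₄) = 0 := by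
    rw [two_nsmul, two_nsmul, add_eq_zero_iff_eq_neg, neg_add]
    exact central
  exact h₂.right_eq_zero_of_smul (h₂.right_eq_zero_of_smul two_two_nsmul)

/-- Let `K` be a field of characteristic zero and `A` an associative (not necessarily
unital) `K`-algebra satisfying `x²y = yx²` and `x³ = 0`. Then every product of four
elements of `A` vanishes. -/
theorem stmt_3 (K : Type*) [Field K] [CharZero K]
    (A : Type*) [NonUnitalRing A] [Module K A] [SMulCommClass K A A] [IsScalarTower K A A]
    (h1 : ∀ x y : A, x * x * y = y * (x * x))
    (h2 : ∀ x : A, x * x * x = 0) :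
    ∀ x₁ x₂ x₃ x₄ : A, x₁ * x₂ * x₃ * x₄ = 0 := by
  have : IsAddTorsionFree A := .of_isTorsionFree K A
  exact stmt_3_general (.of_ne_zero two_ne_zero) (.of_ne_zero three_ne_zero) h1 h2
end

section
/- Let K be a field of characteristic zero and let A be an associative (not necessarily unital) K-algebra satisfying x²y = yx² for all x, y ∈ A and the standard identity S₃(x,y,z) = xyz + yzx + zxy − yxz − xzy − zyx = 0 for all x, y, z ∈ A. Then x(xy − yx)y = 0 for all x, y ∈ A. -/
/-!
In any ring, `S₃(x, y, xy) = [x, y]² - x[x, y]y`. If `S₃` vanishes identically, then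
`x[x, y]y = [x, y]²`, and exchanging `x` and `y` also `y[y, x]x = [x, y]²`. If squares are central,
the expansion of `[x, y]²` reads `[x, y]² = -(x[x, y]y + y[y, x]x)`, whose right-hand side is now
`-2[x, y]²`. Hence `3 x[x, y]y = 3 [x, y]² = 0`.
-/

section NonUnitalRing

variable {A : Type*} [NonUnitalRing A]

/-- The value at `x, y, z` of the standard polynomial `S₃` of degree three, the alternating sum of
the products of `x`, `y` and `z` in all six orders. -/
def standardThree (x y z : A) : A :=
  x * y * z + y * z * x + z * x * y - y * x * z - x * z * y - z * y * x

theorem standardThree_self_mul (x y : A) :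
    standardThree x y (x * y) = ⁅x, y⁆ * ⁅x, y⁆ - x * ⁅x, y⁆ * y := by
  simp only [standardThree, Ring.lie_def, mul_sub, sub_mul, mul_assoc]
  abel

theorem lie_mul_lie_of_commute_mul_self {x y : A} (hx : Commute (x * x) y)
    (hy : Commute (y * y) x) :
    ⁅x, y⁆ * ⁅x, y⁆ = -(x * ⁅x, y⁆ * y + y * ⁅y, x⁆ * x) := by
  have hxyyx : x * (y * (y * x)) = x * (x * (y * y)) := by
    simpa only [mul_assoc] using congrArg (x * ·) hy.eq
  have hyxxy : y * (x * (x * y)) = y * (y * (x * x)) := by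
    simpa only [mul_assoc] using congrArg (y * ·) hx.eq
  simp only [Ring.lie_def, mul_sub, sub_mul, mul_assoc, hxyyx, hyxxy]
  abel

theorem three_nsmul_mul_lie_mul_eq_zero {x y : A} (hx : Commute (x * x) y)
    (hy : Commute (y * y) x) (hxy : standardThree x y (x * y) = 0)
    (hyx : standardThree y x (y * x) = 0) : 3 • (x * ⁅x, y⁆ * y) = 0 := by
  have hx_lie : ⁅x, y⁆ * ⁅x, y⁆ = x * ⁅x, y⁆ * y := by
    rwa [standardThree_self_mul, sub_eq_zero] at hxy
  have hy_lie : ⁅x, y⁆ * ⁅x, y⁆ = y * ⁅y, x⁆ * x := by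
    have hskew : ⁅x, y⁆ = -⁅y, x⁆ := (neg_sub _ _).symm
    rwa [standardThree_self_mul, sub_eq_zero, ← neg_mul_neg, ← hskew] at hyx
  have hsq : ⁅x, y⁆ * ⁅x, y⁆ + (⁅x, y⁆ * ⁅x, y⁆ + ⁅x, y⁆ * ⁅x, y⁆) = 0 := by
    simpa only [← hx_lie, ← hy_lie, eq_neg_iff_add_eq_zero]
      using lie_mul_lie_of_commute_mul_self hx hy
  rw [← hx_lie, ← hsq]
  abel

theorem stmt_4_general (h3 : IsSMulRegular A (3 : ℕ))
    (hsq : ∀ x y : A, x * x * y = y * (x * x))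
    (hS₃ : ∀ x y z : A, standardThree x y z = 0) (x y : A) : x * (x * y - y * x) * y = 0 :=
  h3.right_eq_zero_of_smul <|
    three_nsmul_mul_lie_mul_eq_zero (hsq x y) (hsq y x) (hS₃ x y (x * y)) (hS₃ y x (y * x))

end NonUnitalRing

/-- Let `K` be a field of characteristic zero and `A` an associative (not necessarily
unital) `K`-algebra satisfying `x²y = yx²` and the standard identity
`S₃(x,y,z) = xyz + yzx + zxy - yxz - xzy - zyx = 0`. Then `x(xy - yx)y = 0`. -/
theorem stmt_4 (K : Type*) [Field K] [CharZero K]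
    (A : Type*) [NonUnitalRing A] [Module K A] [SMulCommClass K A A] [IsScalarTower K A A]
    (h1 : ∀ x y : A, x * x * y = y * (x * x))
    (h2 : ∀ x y z : A,
      x * y * z + y * z * x + z * x * y - y * x * z - x * z * y - z * y * x = 0) :
    ∀ x y : A, x * (x * y - y * x) * y = 0 := by
  have : IsAddTorsionFree A := .of_isTorsionFree K A
  exact stmt_4_general (IsAddTorsionFree.nsmul_right_injective three_ne_zero) h1 h2
end

section
/- Let A be an associative ring in which all commutators are central, i.e. (xy − yx)z = z(xy − yx) for all x, y, z ∈ A. Then for all x, y, z, t ∈ A one has [x,y][z,t] = −[x,t][z,y], where [u,v] = uv − vu. -/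
/-!
The map `u ↦ [u,a]` is a derivation, so applying two of them to `xy` gives
`[[xy,a],b] = x[[y,a],b] + [x,b][y,a] + [x,a][y,b] + [[x,a],b]y`.
When commutators are central every double commutator vanishes, and only the two middle terms remain.
-/

namespace RingCommutator

theorem add_lie {A : Type*} [NonUnitalNonAssocRing A] (x y a : A) :
    ⁅x + y, a⁆ = ⁅x, a⁆ + ⁅y, a⁆ := by
  simp only [Ring.lie_def, add_mul, mul_add]
  abel

variable {A : Type*} [NonUnitalRing A]

theorem mul_lie (x y a : A) : ⁅x * y, a⁆ = x * ⁅y, a⁆ + ⁅x, a⁆ * y := by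
  simp only [Ring.lie_def, mul_sub, sub_mul, mul_assoc]
  abel

theorem mul_lie_lie (x y a b : A) :
    ⁅⁅x * y, a⁆, b⁆ = x * ⁅⁅y, a⁆, b⁆ + ⁅x, b⁆ * ⁅y, a⁆ + (⁅x, a⁆ * ⁅y, b⁆ + ⁅⁅x, a⁆, b⁆ * y) :=
  calc
    ⁅⁅x * y, a⁆, b⁆ = ⁅x * ⁅y, a⁆, b⁆ + ⁅⁅x, a⁆ * y, b⁆ := by rw [mul_lie, add_lie]
    _ = _ := by rw [mul_lie x ⁅y, a⁆ b, mul_lie ⁅x, a⁆ y b]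

theorem lie_mul_lie_eq_neg_of_commute {x y a b : A} (hxy : Commute ⁅x * y, a⁆ b)
    (hx : Commute ⁅x, a⁆ b) (hy : Commute ⁅y, a⁆ b) :
    ⁅x, b⁆ * ⁅y, a⁆ = -(⁅x, a⁆ * ⁅y, b⁆) := by
  have sum_eq_zero : 0 = ⁅x, b⁆ * ⁅y, a⁆ + ⁅x, a⁆ * ⁅y, b⁆ := by
    simpa only [hxy.lie_eq, hx.lie_eq, hy.lie_eq, mul_zero, zero_mul, zero_add, add_zero]
      using mul_lie_lie x y a b
  exact eq_neg_of_add_eq_zero_left sum_eq_zero.symm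

end RingCommutator

/-- Let `A` be an associative (not necessarily unital) ring in which all commutators are
central: `(xy - yx)z = z(xy - yx)`. Then `[x,y][z,t] = -[x,t][z,y]` for all `x,y,z,t`. -/
theorem stmt_5 (A : Type*) [NonUnitalRing A]
    (h : ∀ x y z : A, (x * y - y * x) * z = z * (x * y - y * x)) :
    ∀ x y z t : A,
      (x * y - y * x) * (z * t - t * z) = -((x * t - t * x) * (z * y - y * z)) := by
  intro x y z t
  have commute_lie (u v w : A) : Commute ⁅u, v⁆ w := h u v w
  exact RingCommutator.lie_mul_lie_eq_neg_of_commute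
    (commute_lie (x * z) t y) (commute_lie x t y) (commute_lie z t y)
end

section
/- Let K be a field of characteristic zero, let k ≥ 1 and m ≥ 1, and let A be an associative (not necessarily unital) K-algebra in which all commutators are central ([[x,y],z] = 0 for all x,y,z) and which satisfies the identity S₊₁(x₁,…,x₊₁)·x₁^m = 0 for all x₁,…,x₊₁ ∈ A, where S_r denotes the standard polynomial of degree r. Then A also satisfies S₊₃(x₁,…,x₊₃)·x₁^(m−1) = 0 for all x₁,…,x₊₃ ∈ A (where x₁⁰ is omitted, i.e. for m = 1 the conclusion is S₊₃(x₁,…,x₊₃) = 0). -/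
/-- The product `x 0 * x 1 * ⋯ * x n` of a nonempty tuple in a (possibly non-unital)
multiplicative structure. -/
def prodTuple {A : Type*} [Mul A] {n : ℕ} (x : Fin (n + 1) → A) : A :=
  (List.ofFn fun i : Fin n => x i.succ).foldl (· * ·) (x 0)

/-- The standard polynomial `S_{n+1}(x 0, …, x n) = Σ_σ sign σ • x (σ 0) * ⋯ * x (σ n)`,
the sum over all permutations of `{0, …, n}`. -/
def stdPoly {A : Type*} [NonUnitalRing A] {n : ℕ} (x : Fin (n + 1) → A) : A :=
  ∑ σ : Equiv.Perm (Fin (n + 1)), (Equiv.Perm.sign σ : ℤ) • prodTuple (x ∘ σ)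

/-!
Adjoin a unit and work in `⋀ M ⊗ U` with `M` free on one generator per variable. The odd element
`ξ = ∑ v i ⊗ u i` satisfies `ξ ^ n = v 0 ∧ ⋯ ∧ v (n - 1) ⊗ S_n(u)`, so the identity `S_{k+1} x₁ ^ m`
becomes the vanishing of `Φ_k(x) * x ^ m`, where `Φ_k(x)` is the derivative of `ξ ↦ ξ ^ (k + 1)` in
an odd direction `θ * x`. The conclusion is `Φ_{k+2}(x) * x ^ (m - 1) = 0`, and
`Φ_{k+2}(x) = Φ_k(x) ξ ^ 2 + ξ ^ (k + 1) θ δ` for `δ = [x, ξ]`, which anticommutes with `ξ`.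

Replace `x` by `x + t c` with `c = [u i, u l]`, which is central, and compare coefficients of `t`.
Since `2 ξ ^ 2 = ∑ v i ∧ v l ⊗ [u i, u l]`, this trades a factor `x` for a factor `ξ ^ 2`, up to a
term that comes from `Φ_k(c)`. If `k = 2 n + 1`, that term vanishes and
`Φ_k(x) = (n + 1) θ δ ξ ^ (2 n)`, so one is done. If `k = 2 n`, then
`Φ_k(x) ξ ^ 2 = θ x ξ ^ (2 n + 2) - n θ ξ δ ξ ^ (2 n)`, and one gets a linear relation between
`P = θ ξ ^ (2 n + 2) x ^ m` and `Q = θ ξ δ ξ ^ (2 n) x ^ (m - 1)`. Commuting the hypothesis with `ξ`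
gives `θ δ ξ ^ (2 n) x ^ m = 0`, whose linear part in the direction of `ξ` itself is a second
relation between `P` and `Q`; together they force `P = Q = 0`.
-/

open Finset TensorProduct Polynomial

section PowDeriv

variable (K : Type*) {R : Type*} [CommSemiring K] [Ring R] [Algebra K R]

/-- The derivative of `x ↦ x ^ (n + 1)` at `x` in the direction `c`, namely
`∑_{p + q = n} x ^ p * c * x ^ q`, as a linear map in `c`. The exponent is shifted by one so that
no truncated subtraction occurs. -/
def powDeriv (x : R) (n : ℕ) : R →ₗ[K] R :=
  ∑ p ∈ antidiagonal n, LinearMap.mulLeftRight K (x ^ p.1, x ^ p.2)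

theorem powDeriv_apply (x c : R) (n : ℕ) :
    powDeriv K x n c = ∑ p ∈ antidiagonal n, x ^ p.1 * c * x ^ p.2 := by
  simp [powDeriv]

theorem powDeriv_zero (x c : R) : powDeriv K x 0 c = c := by
  simp [powDeriv_apply]

theorem powDeriv_succ (x c : R) (n : ℕ) :
    powDeriv K x (n + 1) c = powDeriv K x n c * x + x ^ (n + 1) * c := by
  simp [powDeriv_apply, Nat.sum_antidiagonal_succ', sum_mul, pow_succ, mul_assoc, add_comm]

theorem add_pow_succ_eq_add_powDeriv {x u : R} (h : ∀ q, u * x ^ q * u = 0) (n : ℕ) :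
    (x + u) ^ (n + 1) = x ^ (n + 1) + powDeriv K x n u := by
  induction n with
  | zero => simp [powDeriv_zero]
  | succ n ih =>
    have hu : powDeriv K x n u * u = 0 := by
      simp only [powDeriv_apply, sum_mul]
      exact sum_eq_zero fun p _ => by simp only [mul_assoc (x ^ p.1), h, mul_zero]
    rw [pow_succ, ih, powDeriv_succ, pow_succ x (n + 1), add_mul, mul_add, mul_add, hu]
    abel

theorem mul_powDeriv_of_commute {a x c : R} (hax : Commute a x) (hc : a * (x * c) = a * (c * x))
    (n : ℕ) : a * powDeriv K x n c = (n + 1) • (a * c * x ^ n) := by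
  have hac (p : ℕ) : a * (x ^ p * c) = a * c * x ^ p := by
    induction p with
    | zero => simp
    | succ p ih =>
      rw [pow_succ', mul_assoc, ← mul_assoc, hax.eq, mul_assoc, ih, ← mul_assoc, ← mul_assoc,
        ← hax.eq, mul_assoc a x c, hc, ← mul_assoc, mul_assoc _ x]
  rw [powDeriv_apply, mul_sum, sum_congr rfl (g := fun _ => a * c * x ^ n), sum_const,
    Nat.card_antidiagonal]
  intro p hp
  rw [← mul_assoc, hac, mul_assoc, ← pow_add, mem_antidiagonal.mp hp]

theorem powDeriv_mul_of_commute {x e : R} (h : Commute x e) (c : R) (n : ℕ) :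
    powDeriv K x n (c * e) = powDeriv K x n c * e := by
  simp only [powDeriv_apply, sum_mul, mul_assoc, (h.pow_left _).eq]

theorem powDeriv_of_commute {x c : R} (h : Commute x c) (n : ℕ) :
    powDeriv K x n c = (n + 1) • (c * x ^ n) := by
  simpa using mul_powDeriv_of_commute K (Commute.one_left x) (congrArg (1 * ·) h.eq) n

end PowDeriv

section Polarization

theorem coeff_zero_C_add_C_mul_X_pow {R : Type*} [Ring R] (x c : R) (n : ℕ) :
    ((C x + C c * X) ^ n).coeff 0 = x ^ n := by
  induction n with
  | zero => simp
  | succ n ih => rw [pow_succ, mul_coeff_zero, ih]; simp [pow_succ]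

theorem coeff_one_C_add_C_mul_X_pow (K : Type*) {R : Type*} [CommSemiring K] [Ring R] [Algebra K R]
    (x c : R) (n : ℕ) : ((C x + C c * X) ^ (n + 1)).coeff 1 = powDeriv K x n c := by
  induction n with
  | zero => simp [powDeriv_zero]
  | succ n ih =>
    rw [pow_succ, mul_coeff_one, ih, coeff_zero_C_add_C_mul_X_pow, powDeriv_succ]
    simp [add_comm]

variable {K R V : Type*} [Field K] [Infinite K] [Ring R] [Algebra K R] [AddCommGroup V] [Module K V]

theorem eq_zero_of_forall_eval_algebraMap_eq_zero {p : R[X]}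
    (h : ∀ t : K, p.eval (algebraMap K R t) = 0) : p = 0 := by
  ext d
  rw [coeff_zero, ← Module.forall_dual_apply_eq_zero_iff K]
  intro φ
  let q : K[X] := ∑ i ∈ range (p.natDegree + 1), monomial i (φ (p.coeff i))
  have hq : q = 0 := Polynomial.funext fun t => by
    have ht := congrArg φ (h t)
    rw [eval_eq_sum_range, map_sum, map_zero] at ht
    rw [eval_zero, ← ht, eval_finsetSum]
    refine sum_congr rfl fun i _ => ?_
    rw [eval_monomial, ← map_pow, ← Algebra.commutes, ← Algebra.smul_def, map_smul, smul_eq_mul,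
      mul_comm]
  rcases lt_or_ge p.natDegree d with hd | hd
  · rw [coeff_eq_zero_of_natDegree_lt hd, map_zero]
  · simpa [q, coeff_monomial, Nat.lt_succ_of_le hd] using congrArg (coeff · d) hq

theorem mul_powDeriv_add_mul_pow_eq_zero {f g : V →ₗ[K] R} {S : Submodule K V} {m : ℕ}
    (h : ∀ x ∈ S, f x * g x ^ (m + 1) = 0) {x c : V} (hx : x ∈ S) (hc : c ∈ S) :
    f x * powDeriv K (g x) m (g c) + f c * g x ^ (m + 1) = 0 := by
  have hp : (C (f x) + C (f c) * X) * (C (g x) + C (g c) * X) ^ (m + 1) = 0 := by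
    refine eq_zero_of_forall_eval_algebraMap_eq_zero (K := K) fun t => ?_
    let ev : R[X] →+* R :=
      eval₂RingHom' (.id R) (algebraMap K R t) fun a => (Algebra.commutes t a).symm
    have hev (a b : R) : ev (C a + C b * X) = a + t • b := by
      change eval (algebraMap K R t) _ = _
      simp [Algebra.smul_def, Algebra.commutes]
    change ev _ = 0
    rw [map_mul, map_pow, hev, hev, ← map_smul, ← map_add, ← map_smul, ← map_add]
    exact h _ (S.add_mem hx (S.smul_mem t hc))
  simpa [mul_coeff_one, coeff_zero_C_add_C_mul_X_pow, coeff_one_C_add_C_mul_X_pow K]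
    using congrArg (coeff · 1) hp

theorem nsmul_mul_pow_mul_add_mul_pow_eq_zero {f g : V →ₗ[K] R} {S : Submodule K V} {m : ℕ}
    (h : ∀ x ∈ S, f x * g x ^ (m + 1) = 0) {x c : V} (hx : x ∈ S) (hc : c ∈ S)
    (hxc : Commute (g x) (g c)) :
    (m + 1) • (f x * g x ^ m * g c) + f c * g x ^ (m + 1) = 0 := by
  rw [← mul_powDeriv_add_mul_pow_eq_zero h hx hc, powDeriv_of_commute K hxc, mul_smul_comm,
    mul_assoc, (hxc.pow_left m).eq]

end Polarization

section OddElement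

variable (K : Type*) {R : Type*} [CommSemiring K] [Ring R] [Algebra K R] {θ x ξ : R}

theorem commute_sq_of_anticommute {a : R} (h : a * ξ = -(ξ * a)) : Commute (ξ ^ 2) a := by
  have : SemiconjBy a ξ (-ξ) := by rw [SemiconjBy, h, neg_mul]
  simpa [SemiconjBy, Commute, eq_comm] using this.pow_right 2

theorem commute_sq_of_lie_anticommute (h : ⁅x, ξ⁆ * ξ = -(ξ * ⁅x, ξ⁆)) : Commute (ξ ^ 2) x := by
  rw [Ring.lie_def] at h
  have : x * ξ ^ 2 - ξ ^ 2 * x = (x * ξ - ξ * x) * ξ + ξ * (x * ξ - ξ * x) := by noncomm_ring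
  rw [h, neg_add_cancel, sub_eq_zero] at this
  exact this.symm

theorem mul_mul_pow_mul_mul_eq_zero (hθθ : θ * θ = 0) (hθξ : θ * ξ = -(ξ * θ)) (hθx : Commute θ x)
    (q : ℕ) : θ * x * ξ ^ q * (θ * x) = 0 := by
  have hsemi : SemiconjBy θ ξ (-ξ) := by rw [SemiconjBy, hθξ, neg_mul]
  rw [hθx.eq, mul_assoc x, (hsemi.pow_right q).eq, hθx.symm.eq, ← mul_assoc, mul_assoc _ _ θ,
    mul_assoc _ θ θ, hθθ, mul_zero, mul_zero, zero_mul]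

theorem pow_mul_eq_mul_pow_add_lie (hδx : Commute ⁅x, ξ⁆ x) (m : ℕ) :
    x ^ (m + 1) * ξ = ξ * x ^ (m + 1) + (m + 1) • (⁅x, ξ⁆ * x ^ m) := by
  have hxξ : x * ξ = ξ * x + ⁅x, ξ⁆ := by rw [Ring.lie_def]; abel
  induction m with
  | zero => simpa using hxξ
  | succ m ih =>
    rw [pow_succ', mul_assoc, ih, mul_add, ← mul_assoc, hxξ, mul_smul_comm, ← hδx.left_comm,
      ← pow_succ', add_mul, mul_assoc ξ, ← pow_succ', succ_nsmul _ (m + 1)]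
    abel

theorem powDeriv_add_two (hθξ : θ * ξ = -(ξ * θ)) (k : ℕ) :
    powDeriv K ξ (k + 2) (θ * x) =
      powDeriv K ξ k (θ * x) * ξ ^ 2 + ξ ^ (k + 1) * (θ * ⁅x, ξ⁆) := by
  have h : θ * ⁅x, ξ⁆ = θ * x * ξ + ξ * (θ * x) := by
    rw [Ring.lie_def, mul_sub, ← mul_assoc, ← mul_assoc θ ξ, hθξ]
    noncomm_ring
  rw [powDeriv_succ, powDeriv_succ, h]
  noncomm_ring

theorem powDeriv_two_mul_of_anticommute (hθξ : θ * ξ = -(ξ * θ)) (n : ℕ) :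
    powDeriv K ξ (2 * n) θ = θ * (ξ ^ 2) ^ n := by
  induction n with
  | zero => simp [powDeriv_zero]
  | succ n ih =>
    have h := powDeriv_add_two (x := 1) K hθξ (2 * n)
    simpa only [mul_add_one, Ring.lie_def, one_mul, mul_one, sub_self, mul_zero, add_zero, ih,
      mul_assoc, ← pow_succ] using h

theorem pow_two_mul_add_one_mul_mul_lie (hθξ : θ * ξ = -(ξ * θ)) (hδξ : ⁅x, ξ⁆ * ξ = -(ξ * ⁅x, ξ⁆))
    (n : ℕ) : ξ ^ (2 * n + 1) * (θ * ⁅x, ξ⁆) = -(θ * ξ * ⁅x, ξ⁆ * (ξ ^ 2) ^ n) := by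
  have hwθδ := (commute_sq_of_anticommute hθξ).mul_right (commute_sq_of_anticommute hδξ)
  rw [pow_succ', pow_mul, mul_assoc ξ, (hwθδ.pow_left n).eq, ← mul_assoc, ← mul_assoc ξ, hθξ]
  simp only [neg_mul, neg_neg]

theorem powDeriv_two_mul_add_one (hθξ : θ * ξ = -(ξ * θ)) (hδξ : ⁅x, ξ⁆ * ξ = -(ξ * ⁅x, ξ⁆))
    (n : ℕ) : powDeriv K ξ (2 * n + 1) (θ * x) = (n + 1) • (θ * ⁅x, ξ⁆ * (ξ ^ 2) ^ n) := by
  induction n with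
  | zero =>
    rw [mul_zero, powDeriv_succ, powDeriv_zero, Ring.lie_def, mul_sub, ← mul_assoc θ ξ, hθξ]
    noncomm_ring
  | succ n ih =>
    have hcomm := (commute_sq_of_anticommute hθξ).mul_right (commute_sq_of_anticommute hδξ)
    rw [show 2 * (n + 1) + 1 = 2 * n + 1 + 2 by ring, powDeriv_add_two K hθξ, ih,
      show 2 * n + 1 + 1 = 2 * (n + 1) by ring, pow_mul, (hcomm.pow_left (n + 1)).eq,
      smul_mul_assoc, mul_assoc _ (_ ^ n), ← pow_succ, succ_nsmul _ (n + 1)]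

theorem powDeriv_two_mul_mul_sq (hθξ : θ * ξ = -(ξ * θ)) (hδξ : ⁅x, ξ⁆ * ξ = -(ξ * ⁅x, ξ⁆))
    (n : ℕ) : powDeriv K ξ (2 * n) (θ * x) * ξ ^ 2 =
      θ * x * (ξ ^ 2) ^ (n + 1) - n • (θ * ξ * ⁅x, ξ⁆ * (ξ ^ 2) ^ n) := by
  induction n with
  | zero => simp [powDeriv_zero]
  | succ n ih =>
    rw [mul_add_one, powDeriv_add_two K hθξ, ih, pow_two_mul_add_one_mul_mul_lie hθξ hδξ,
      pow_succ _ (n + 1), pow_succ _ n, succ_nsmul]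
    noncomm_ring

theorem powDeriv_two_mul_mul_add_mul (hθξ : θ * ξ = -(ξ * θ))
    (hδξ : ⁅x, ξ⁆ * ξ = -(ξ * ⁅x, ξ⁆)) (n : ℕ) :
    powDeriv K ξ (2 * n) (θ * x) * ξ + ξ * powDeriv K ξ (2 * n) (θ * x) =
      (2 * n + 1) • (θ * ⁅x, ξ⁆ * (ξ ^ 2) ^ n) := by
  induction n with
  | zero =>
    rw [mul_zero, powDeriv_zero, Ring.lie_def, mul_sub, ← mul_assoc θ ξ, hθξ]
    noncomm_ring
  | succ n ih =>
    set Φ := powDeriv K ξ (2 * n) (θ * x)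
    have hθδξ : θ * ⁅x, ξ⁆ * ξ = ξ * (θ * ⁅x, ξ⁆) := by
      rw [mul_assoc, hδξ, mul_neg, ← mul_assoc, hθξ, neg_mul, neg_neg, mul_assoc]
    have hwθδ := (commute_sq_of_anticommute hθξ).mul_right (commute_sq_of_anticommute hδξ)
    have hlast : ξ ^ (2 * n + 1) * (θ * ⁅x, ξ⁆) * ξ + ξ * (ξ ^ (2 * n + 1) * (θ * ⁅x, ξ⁆)) =
        2 • (θ * ⁅x, ξ⁆ * (ξ ^ 2) ^ (n + 1)) := by
      rw [mul_assoc, hθδξ, ← mul_assoc, ← pow_succ, ← mul_assoc ξ, ← pow_succ',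
        ← two_nsmul,
        show 2 * n + 1 + 1 = 2 * (n + 1) by ring, pow_mul, (hwθδ.pow_left (n + 1)).eq]
    calc
      _ = (Φ * ξ + ξ * Φ) * ξ ^ 2 +
          (ξ ^ (2 * n + 1) * (θ * ⁅x, ξ⁆) * ξ + ξ * (ξ ^ (2 * n + 1) * (θ * ⁅x, ξ⁆))) := by
        rw [mul_add_one, powDeriv_add_two K hθξ, add_mul, mul_add, add_mul, mul_assoc Φ ξ,
          ← pow_succ', mul_assoc Φ, ← pow_succ, mul_assoc ξ Φ]
        abel
      _ = (2 * (n + 1) + 1) • (θ * ⁅x, ξ⁆ * (ξ ^ 2) ^ (n + 1)) := by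
        rw [ih, hlast, smul_mul_assoc, mul_assoc _ (_ ^ n), ← pow_succ, ← add_nsmul]
        congr 1

theorem powDeriv_two_mul_mul_lie (hθξ : θ * ξ = -(ξ * θ)) (hδξ : ⁅x, ξ⁆ * ξ = -(ξ * ⁅x, ξ⁆))
    (hδδ : ⁅x, ξ⁆ * ⁅x, ξ⁆ = 0) (n : ℕ) :
    powDeriv K ξ (2 * n) (θ * x) * ⁅x, ξ⁆ = θ * x * ⁅x, ξ⁆ * (ξ ^ 2) ^ n := by
  induction n with
  | zero => simp [powDeriv_zero]
  | succ n ih =>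
    rw [mul_add_one, powDeriv_add_two K hθξ, add_mul, mul_assoc,
      (commute_sq_of_anticommute hδξ).eq, ← mul_assoc, ih, mul_assoc (ξ ^ _), mul_assoc θ ⁅x, ξ⁆,
      hδδ, mul_zero, mul_zero, add_zero, mul_assoc, ← pow_succ]

theorem lie_mul_pow_mul_pow_eq_zero_of_powDeriv [IsAddTorsionFree R] (hθξ : θ * ξ = -(ξ * θ))
    (hδξ : ⁅x, ξ⁆ * ξ = -(ξ * ⁅x, ξ⁆)) (hδδ : ⁅x, ξ⁆ * ⁅x, ξ⁆ = 0) (hδx : Commute ⁅x, ξ⁆ x)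
    {n m : ℕ} (h : powDeriv K ξ (2 * n) (θ * x) * x ^ (m + 1) = 0) :
    θ * ⁅x, ξ⁆ * (ξ ^ 2) ^ n * x ^ (m + 1) = 0 := by
  set Φ := powDeriv K ξ (2 * n) (θ * x)
  have hwx := (commute_sq_of_lie_anticommute hδξ).pow_left n
  have hmove : θ * x * ⁅x, ξ⁆ * (ξ ^ 2) ^ n * x ^ m = θ * ⁅x, ξ⁆ * (ξ ^ 2) ^ n * x ^ (m + 1) := by
    rw [mul_assoc θ x, ← hδx.eq, pow_succ' x]
    simp only [mul_assoc, hwx.left_comm]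
  refine (nsmul_eq_zero_iff_right (show 2 * n + 1 + (m + 1) ≠ 0 by lia)).mp ?_
  calc
    _ = (Φ * ξ + ξ * Φ) * x ^ (m + 1) + (m + 1) • (Φ * ⁅x, ξ⁆ * x ^ m) := by
      rw [powDeriv_two_mul_mul_add_mul K hθξ hδξ, powDeriv_two_mul_mul_lie K hθξ hδξ hδδ,
        hmove, add_nsmul, smul_mul_assoc]
    _ = Φ * x ^ (m + 1) * ξ + ξ * (Φ * x ^ (m + 1)) := by
      rw [mul_assoc Φ (x ^ _) ξ, pow_mul_eq_mul_pow_add_lie hδx, mul_add, mul_smul_comm]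
      noncomm_ring
    _ = 0 := by rw [h, zero_mul, mul_zero, add_zero]

theorem nsmul_mul_lie_mul_pow_add_eq_zero (hδξ : ⁅x, ξ⁆ * ξ = -(ξ * ⁅x, ξ⁆))
    (hδδ : ⁅x, ξ⁆ * ⁅x, ξ⁆ = 0) (hδx : Commute ⁅x, ξ⁆ x)
    {n m : ℕ} (h : θ * ⁅x, ξ⁆ * (ξ ^ 2) ^ n * powDeriv K x m ξ =
      2 • (θ * (ξ ^ 2) ^ (n + 1) * x ^ (m + 1))) :
    (m + 1) • (θ * ξ * ⁅x, ξ⁆ * (ξ ^ 2) ^ n * x ^ m) +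
      2 • (θ * (ξ ^ 2) ^ (n + 1) * x ^ (m + 1)) = 0 := by
  have hwδ := (commute_sq_of_anticommute hδξ).pow_left n
  have hwξ : Commute ((ξ ^ 2) ^ n) ξ := .pow_left (.pow_left (.refl ξ) 2) n
  have hδxξ : ⁅x, ξ⁆ * (x * ξ) = ⁅x, ξ⁆ * (ξ * x) := by
    rw [← sub_eq_zero, ← mul_sub, ← Ring.lie_def, hδδ]
  suffices θ * ⁅x, ξ⁆ * (ξ ^ 2) ^ n * powDeriv K x m ξ =
      -((m + 1) • (θ * ξ * ⁅x, ξ⁆ * (ξ ^ 2) ^ n * x ^ m)) by rw [← h, this, add_neg_cancel]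
  calc
    _ = θ * ((ξ ^ 2) ^ n * (⁅x, ξ⁆ * powDeriv K x m ξ)) := by
      rw [mul_assoc θ, ← hwδ.eq, mul_assoc θ, mul_assoc (_ ^ n)]
    _ = _ := by
      rw [mul_powDeriv_of_commute K hδx hδxξ, hδξ, mul_smul_comm, mul_smul_comm, ← smul_neg,
        neg_mul, mul_neg, mul_neg, ← mul_assoc ((ξ ^ 2) ^ n), (hwξ.mul_right hwδ).eq]
      simp only [mul_assoc]

theorem powDeriv_two_mul_add_two_mul_pow_eq_zero [IsAddTorsionFree R] (hθξ : θ * ξ = -(ξ * θ))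
    (hδξ : ⁅x, ξ⁆ * ξ = -(ξ * ⁅x, ξ⁆)) {n m : ℕ}
    (hΦ : (m + 1) • (powDeriv K ξ (2 * n) (θ * x) * x ^ m * ξ ^ 2) +
      θ * (ξ ^ 2) ^ (n + 1) * x ^ (m + 1) = 0)
    (hδ : (m + 1) • (θ * ξ * ⁅x, ξ⁆ * (ξ ^ 2) ^ n * x ^ m) +
      2 • (θ * (ξ ^ 2) ^ (n + 1) * x ^ (m + 1)) = 0) :
    powDeriv K ξ (2 * n + 2) (θ * x) * x ^ m = 0 := by
  have hwx := commute_sq_of_lie_anticommute hδξ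
  set P := θ * (ξ ^ 2) ^ (n + 1) * x ^ (m + 1) with hP
  set Q := θ * ξ * ⁅x, ξ⁆ * (ξ ^ 2) ^ n * x ^ m with hQ
  have hΦw : powDeriv K ξ (2 * n) (θ * x) * ξ ^ 2 * x ^ m = P - n • Q := by
    rw [powDeriv_two_mul_mul_sq K hθξ hδξ, sub_mul, smul_mul_assoc, ← hQ, mul_assoc θ x,
      ← (hwx.pow_left (n + 1)).eq, ← mul_assoc θ, mul_assoc _ x, ← pow_succ']
  rw [mul_assoc, ← (hwx.pow_right m).eq, ← mul_assoc, hΦw] at hΦ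
  -- `hΦ` and `hδ` are now linear equations in `P` and `Q`, of determinant `(m+1)(m+2+2n)`.
  have hP_zero : P = 0 := by
    refine (nsmul_eq_zero_iff_right (show m + 2 + 2 * n ≠ 0 by lia)).mp ?_
    calc
      _ = ((m + 1) • (P - n • Q) + P) + n • ((m + 1) • Q + 2 • P) := by module
      _ = 0 := by rw [hΦ, hδ, smul_zero, add_zero]
  have hQ_zero : Q = 0 := by
    rw [hP_zero, smul_zero, add_zero] at hδ
    exact (nsmul_eq_zero_iff_right m.succ_ne_zero).mp hδ
  rw [powDeriv_add_two K hθξ, add_mul, hΦw, pow_two_mul_add_one_mul_mul_lie hθξ hδξ, neg_mul, ← hQ,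
    hP_zero, hQ_zero, smul_zero, sub_zero, neg_zero, add_zero]

end OddElement

section OddPolarization

variable {K R V I : Type*} [Field K] [Infinite K] [Ring R] [Algebra K R] [AddCommGroup V]
  [Module K V] [Fintype I]

theorem mul_lie_mul_powDeriv_eq_of_forall {g : V →ₗ[K] R} {S : Submodule K V} {u : I → V}
    {e : I → R} {θ ξ : R} (hu : ∀ i, u i ∈ S) (hge : ∀ y i, Commute (g y) (e i))
    (hξe : ∀ i, Commute (ξ ^ 2) (e i)) (hξ : ∑ i, g (u i) * e i = ξ)
    (hlie : ∑ i, ⁅g (u i), ξ⁆ * e i = -(2 • ξ ^ 2)) {n m : ℕ}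
    (h : ∀ x ∈ S, θ * ⁅g x, ξ⁆ * (ξ ^ 2) ^ n * g x ^ (m + 1) = 0) {x : V} (hx : x ∈ S) :
    θ * ⁅g x, ξ⁆ * (ξ ^ 2) ^ n * powDeriv K (g x) m ξ =
      2 • (θ * (ξ ^ 2) ^ (n + 1) * g x ^ (m + 1)) := by
  let f : V →ₗ[K] R :=
    LinearMap.mulRight K ((ξ ^ 2) ^ n) ∘ₗ LinearMap.mulLeft K θ ∘ₗ
      (LinearMap.mulRight K ξ - LinearMap.mulLeft K ξ) ∘ₗ g
  have hf (y : V) : f y = θ * ⁅g y, ξ⁆ * (ξ ^ 2) ^ n := rfl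
  -- Polarize `h` at `x` in each direction `u i`, multiply by `e i` and sum over `i`.
  have hpolar (i : I) : f x * powDeriv K (g x) m (g (u i)) + f (u i) * g x ^ (m + 1) = 0 :=
    mul_powDeriv_add_mul_pow_eq_zero h hx (hu i)
  have hfirst : ∑ i, f x * powDeriv K (g x) m (g (u i)) * e i = f x * powDeriv K (g x) m ξ := by
    simp only [mul_assoc, ← powDeriv_mul_of_commute K (hge x _)]
    rw [← mul_sum, ← map_sum, hξ]
  have hsecond : ∑ i, f (u i) * g x ^ (m + 1) * e i =
      -(2 • (θ * (ξ ^ 2) ^ (n + 1) * g x ^ (m + 1))) := by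
    have hmove (i : I) : f (u i) * g x ^ (m + 1) * e i =
        θ * (⁅g (u i), ξ⁆ * e i) * (ξ ^ 2) ^ n * g x ^ (m + 1) := by
      rw [hf, mul_assoc _ _ (e i), ((hge x i).pow_left _).eq, ← mul_assoc, mul_assoc _ _ (e i),
        ((hξe i).pow_left n).eq, ← mul_assoc, mul_assoc θ]
    simp only [hmove, ← sum_mul, ← mul_sum]
    rw [hlie, pow_succ' (ξ ^ 2), mul_neg, neg_mul, neg_mul, mul_smul_comm, smul_mul_assoc,
      smul_mul_assoc, mul_assoc θ]
  rw [← hf, ← sub_eq_zero, sub_eq_add_neg, ← hsecond, ← hfirst, ← sum_add_distrib]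
  exact sum_eq_zero fun i _ => by rw [← add_mul, hpolar, zero_mul]

end OddPolarization

section OddSum

open ExteriorAlgebra

variable {K M U I J : Type*} [CommRing K] [AddCommGroup M] [Module K M] [Ring U] [Algebra K U]
  [Fintype I] [Fintype J]

local notation "𝓔" => ExteriorAlgebra K M ⊗[K] U

variable (K) in
/-- The element `∑ i, v i ⊗ u i` of `⋀ M ⊗ U`, odd for the grading of the exterior algebra. Its
powers collect the alternating sums of products of the `u i`, among them the standard polynomial. -/
def oddSum (v : I → M) (u : I → U) : 𝓔 :=
  ∑ i, ι K (v i) ⊗ₜ u i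

theorem oddSum_update [DecidableEq I] (v : I → M) (u : I → U) (i : I) (x : U) :
    oddSum K v (Function.update u i x) =
      ι K (v i) ⊗ₜ x + oddSum K v (Function.update u i 0) := by
  simp only [oddSum, ← add_sum_erase univ _ (mem_univ i), Function.update_self, tmul_zero, zero_add]
  congr 1
  exact sum_congr rfl fun l hl => by simp [ne_of_mem_erase hl]

theorem ι_tmul_mul_ι_tmul_of_commute (a b : M) {x y : U} (h : Commute x y) :
    (ι K a ⊗ₜ[K] x) * (ι K b ⊗ₜ[K] y) = -((ι K b ⊗ₜ[K] y) * (ι K a ⊗ₜ[K] x)) := by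
  rw [Algebra.TensorProduct.tmul_mul_tmul, Algebra.TensorProduct.tmul_mul_tmul, h.eq,
    eq_neg_of_add_eq_zero_left (ι_add_mul_swap a b), neg_tmul]

theorem ι_tmul_mul_oddSum_of_commute (a : M) (v : I → M) {x : U} {u : I → U}
    (h : ∀ i, Commute x (u i)) :
    (ι K a ⊗ₜ[K] x) * oddSum K v u = -(oddSum K v u * (ι K a ⊗ₜ[K] x)) := by
  rw [oddSum, mul_sum, sum_mul, ← sum_neg_distrib]
  exact sum_congr rfl fun i _ => ι_tmul_mul_ι_tmul_of_commute a (v i) (h i)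

theorem oddSum_mul_oddSum_of_commute (v : I → M) (v' : J → M) {u : I → U} {u' : J → U}
    (h : ∀ i j, Commute (u i) (u' j)) :
    oddSum K v u * oddSum K v' u' = -(oddSum K v' u' * oddSum K v u) := by
  rw [oddSum, sum_mul, mul_sum, ← sum_neg_distrib]
  exact sum_congr rfl fun i _ => ι_tmul_mul_oddSum_of_commute (v i) v' (h i)

theorem one_tmul_lie_oddSum (x : U) (v : I → M) (u : I → U) :
    ⁅(1 ⊗ₜ x : 𝓔), oddSum K v u⁆ = oddSum K v fun i => ⁅x, u i⁆ := by
  simp only [Ring.lie_def, oddSum, mul_sum, sum_mul, Algebra.TensorProduct.tmul_mul_tmul, one_mul,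
    mul_one, ← sum_sub_distrib, ← tmul_sub]

theorem sum_ι_tmul_one_mul_one_tmul (v : I → M) (u : I → U) :
    ∑ i, 1 ⊗ₜ[K] u i * ι K (v i) ⊗ₜ[K] (1 : U) = oddSum K v u := by
  simp [oddSum]

theorem two_nsmul_oddSum_sq (v : I → M) (u : I → U) :
    2 • oddSum K v u ^ 2 = ∑ i, ∑ l, (ι K (v i) * ι K (v l)) ⊗ₜ[K] ⁅u i, u l⁆ := by
  have hsq : oddSum K v u ^ 2 = ∑ i, ∑ l, (ι K (v i) * ι K (v l)) ⊗ₜ[K] (u i * u l) := by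
    simp only [sq, oddSum, sum_mul_sum, Algebra.TensorProduct.tmul_mul_tmul]
  rw [two_nsmul]
  nth_rw 2 [hsq.trans sum_comm]
  simp only [hsq, ← sum_add_distrib]
  refine sum_congr rfl fun i _ => sum_congr rfl fun l _ => ?_
  rw [eq_neg_of_add_eq_zero_left (ι_add_mul_swap (v l) (v i)), neg_tmul, ← sub_eq_add_neg,
    ← tmul_sub, Ring.lie_def]

theorem mul_oddSum_sq_eq_zero [IsAddTorsionFree (𝓔)] {v : I → M}
    {u : I → U} {Y : 𝓔} (h : ∀ i l, Y * 1 ⊗ₜ[K] ⁅u i, u l⁆ = 0) :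
    Y * oddSum K v u ^ 2 = 0 := by
  refine (nsmul_eq_zero_iff_right two_ne_zero).mp ?_
  rw [← mul_smul_comm, two_nsmul_oddSum_sq, mul_sum]
  refine sum_eq_zero fun i _ => ?_
  rw [mul_sum]
  refine sum_eq_zero fun l _ => ?_
  have hsplit : (ι K (v i) * ι K (v l)) ⊗ₜ[K] ⁅u i, u l⁆ =
      1 ⊗ₜ ⁅u i, u l⁆ * (ι K (v i) * ι K (v l)) ⊗ₜ 1 := by simp
  rw [hsplit, ← mul_assoc, h, zero_mul]

theorem prod_ofFn_tmul {E : Type*} [Ring E] [Algebra K E] {n : ℕ} (a : Fin n → E) (b : Fin n → U) :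
    (List.ofFn fun i => a i ⊗ₜ[K] b i).prod = (List.ofFn a).prod ⊗ₜ (List.ofFn b).prod := by
  induction n with
  | zero => simp [Algebra.TensorProduct.one_def]
  | succ n ih => simp [List.ofFn_succ, ih]

theorem oddSum_pow (v : I → M) (u : I → U) (r : ℕ) :
    oddSum K v u ^ r =
      ∑ f : Fin r → I, ιMulti K r (v ∘ f) ⊗ₜ MultilinearMap.mkPiAlgebraFin K r U (u ∘ f) := by
  classical
  rw [← MultilinearMap.mkPiAlgebraFin_apply_const (R := K), oddSum, MultilinearMap.map_sum]
  exact sum_congr rfl fun f _ => prod_ofFn_tmul (fun p => ι K (v (f p))) (u ∘ f)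

variable (K U) in
/-- The standard polynomial of degree `n` on a unital algebra, as an alternating map. -/
def stdAlt (n : ℕ) : U [⋀^Fin n]→ₗ[K] U :=
  MultilinearMap.alternatization (MultilinearMap.mkPiAlgebraFin K n U)

theorem ιMulti_comp_perm_tmul {n : ℕ} (v : Fin n → M) (u : U) (σ : Equiv.Perm (Fin n)) :
    ιMulti K n (v ∘ σ) ⊗ₜ[K] u = ιMulti K n v ⊗ₜ[K] (Equiv.Perm.sign σ • u) := by
  rw [AlternatingMap.map_perm, Units.smul_def, Units.smul_def, ← Int.cast_smul_eq_zsmul K,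
    ← Int.cast_smul_eq_zsmul K, smul_tmul]

theorem factorial_nsmul_oddSum_pow (v : I → M) (u : I → U) (r : ℕ) :
    r.factorial • oddSum K v u ^ r =
      ∑ f : Fin r → I, ιMulti K r (v ∘ f) ⊗ₜ stdAlt K U r (u ∘ f) := by
  let P := MultilinearMap.mkPiAlgebraFin K r U
  have hperm (σ : Equiv.Perm (Fin r)) :
      ∑ f : Fin r → I, ιMulti K r (v ∘ f) ⊗ₜ[K] (Equiv.Perm.sign σ • P ((u ∘ f) ∘ σ)) =
        oddSum K v u ^ r := by
    rw [oddSum_pow]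
    exact Fintype.sum_equiv (σ.symm.arrowCongr (.refl I)) _ _ fun f =>
      (ιMulti_comp_perm_tmul (v ∘ f) (P ((u ∘ f) ∘ σ)) σ).symm
  calc
    _ = ∑ _σ : Equiv.Perm (Fin r), oddSum K v u ^ r := by simp [Fintype.card_perm]
    _ = ∑ σ : Equiv.Perm (Fin r), ∑ f : Fin r → I,
        ιMulti K r (v ∘ f) ⊗ₜ[K] (Equiv.Perm.sign σ • P ((u ∘ f) ∘ σ)) := by simp only [hperm]
    _ = _ := by
      rw [sum_comm]
      simp only [stdAlt, MultilinearMap.alternatization_apply, tmul_sum]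
      rfl

theorem oddSum_pow_eq_ιMulti_tmul_stdAlt {n : ℕ} (v : Fin n → M) (u : Fin n → U) :
    oddSum K v u ^ n = ιMulti K n v ⊗ₜ stdAlt K U n u := by
  have hvanish (f : Fin n → Fin n) (hf : f ∉ Set.range ((⇑) : Equiv.Perm (Fin n) → _)) :
      ιMulti K n (v ∘ f) ⊗ₜ[K] MultilinearMap.mkPiAlgebraFin K n U (u ∘ f) = 0 := by
    have hinj : ¬ Function.Injective f := fun h =>
      hf ⟨.ofBijective f (Finite.injective_iff_bijective.mp h), rfl⟩
    rw [AlternatingMap.map_eq_zero_of_not_injective _ _ fun h => hinj h.of_comp, zero_tmul]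
  rw [oddSum_pow, stdAlt, MultilinearMap.alternatization_apply, tmul_sum]
  exact (Fintype.sum_of_injective _ DFunLike.coe_injective _ _ hvanish fun σ =>
    (ιMulti_comp_perm_tmul v _ σ).symm).symm

theorem eq_zero_of_ιMulti_basis_tmul_eq_zero {n : ℕ} (b : Module.Basis (Fin n) K M) {z : U}
    (h : ιMulti K n b ⊗ₜ[K] z = 0) : z = 0 := by
  let φ : ExteriorAlgebra K M →ₗ[K] K := liftAlternating (Pi.single n b.det)
  simpa [φ, liftAlternating_apply_ιMulti, b.det_self] using
    congrArg (fun t => TensorProduct.lid K U (φ.rTensor U t)) h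

theorem stdAlt_mul_pow_eq_zero_of_apply_eq {S : Submodule K U} {n m : ℕ}
    (h : ∀ x : Fin (n + 1) → U, (∀ i, x i ∈ S) → stdAlt K U (n + 1) x * x 0 ^ m = 0)
    {x : Fin (n + 1) → U} (hx : ∀ i, x i ∈ S) (p : Fin (n + 1)) :
    stdAlt K U (n + 1) x * x p ^ m = 0 := by
  have hswap := h (x ∘ Equiv.swap 0 p) fun i => hx _
  rw [AlternatingMap.map_perm, smul_mul_assoc, Function.comp_apply, Equiv.swap_apply_left,
    smul_eq_zero_iff_eq] at hswap
  exact hswap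

theorem oddSum_pow_sub_mul_pow_eq_zero [DecidableEq I]
    [IsAddTorsionFree (𝓔)] {S : Submodule K U} {n m : ℕ}
    (h : ∀ x : Fin (n + 1) → U, (∀ i, x i ∈ S) → stdAlt K U (n + 1) x * x 0 ^ m = 0)
    (v : I → M) {u : I → U} (hu : ∀ i, u i ∈ S) (i : I) :
    (oddSum K v u ^ (n + 1) - oddSum K v (Function.update u i 0) ^ (n + 1)) * 1 ⊗ₜ u i ^ m = 0 := by
  refine (nsmul_eq_zero_iff_right (n + 1).factorial_ne_zero).mp ?_
  rw [← smul_mul_assoc, smul_sub, factorial_nsmul_oddSum_pow, factorial_nsmul_oddSum_pow,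
    ← sum_sub_distrib, sum_mul]
  refine sum_eq_zero fun f _ => ?_
  rw [← tmul_sub, Algebra.TensorProduct.tmul_pow, Algebra.TensorProduct.tmul_mul_tmul]
  by_cases hf : ∃ p, f p = i
  · obtain ⟨p, rfl⟩ := hf
    have hzero : stdAlt K U (n + 1) (Function.update u (f p) 0 ∘ f) = 0 :=
      AlternatingMap.map_coord_zero _ p (by simp)
    have hpow : stdAlt K U (n + 1) (u ∘ f) * u (f p) ^ m = 0 :=
      stdAlt_mul_pow_eq_zero_of_apply_eq h (fun q => hu (f q)) p
    rw [hzero, sub_zero, hpow, tmul_zero]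
  · have hcomp : Function.update u i 0 ∘ f = u ∘ f :=
      funext fun p => Function.update_of_ne (fun hp => hf ⟨p, hp⟩) _ _
    rw [hcomp, sub_self, zero_mul, tmul_zero]

theorem commute_one_tmul {c : U} (h : ∀ z, Commute c z) (t : 𝓔) :
    Commute (1 ⊗ₜ c) t := by
  induction t with
  | zero => exact .zero_right _
  | tmul e z => exact (Commute.one_left e).tmul (h z)
  | add s t hs ht => exact hs.add_right ht

theorem commute_one_tmul_oddSum {x : U} {u : I → U} (h : ∀ i, Commute x (u i)) (v : I → M) :
    Commute (1 ⊗ₜ x) (oddSum K v u) :=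
  .sum_right _ _ _ fun i _ => (Commute.one_left _).tmul (h i)

theorem lie_oddSum_mul_oddSum (hU : ∀ x y z : U, Commute ⁅x, y⁆ z) (v : I → M) (u : I → U)
    (x : U) : ⁅(1 ⊗ₜ x : 𝓔), oddSum K v u⁆ * oddSum K v u =
      -(oddSum K v u * ⁅(1 ⊗ₜ x : 𝓔), oddSum K v u⁆) := by
  rw [one_tmul_lie_oddSum]
  exact oddSum_mul_oddSum_of_commute v v fun i l => hU _ _ _

theorem lie_oddSum_mul_self [IsAddTorsionFree (𝓔)]
    (hU : ∀ x y z : U, Commute ⁅x, y⁆ z) (v : I → M) (u : I → U) (x : U) :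
    ⁅(1 ⊗ₜ x : 𝓔), oddSum K v u⁆ * ⁅(1 ⊗ₜ x : 𝓔), oddSum K v u⁆ = 0 := by
  rw [one_tmul_lie_oddSum, ← self_eq_neg]
  exact oddSum_mul_oddSum_of_commute v v fun i l => hU _ _ _

theorem commute_lie_oddSum (hU : ∀ x y z : U, Commute ⁅x, y⁆ z) (v : I → M) (u : I → U)
    (x : U) : Commute ⁅(1 ⊗ₜ x : 𝓔), oddSum K v u⁆ (1 ⊗ₜ x) := by
  rw [one_tmul_lie_oddSum]
  exact (commute_one_tmul_oddSum (fun i => (hU x (u i) x).symm) v).symm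

theorem ι_tmul_one_mul_oddSum (a : M) (v : I → M) (u : I → U) :
    (ι K a ⊗ₜ[K] 1) * oddSum K v u = -(oddSum K v u * (ι K a ⊗ₜ[K] 1)) :=
  ι_tmul_mul_oddSum_of_commute a v fun i => .one_left (u i)

theorem sum_lie_oddSum_mul_ι_tmul_one (v : I → M) (u : I → U) :
    ∑ i, ⁅(1 ⊗ₜ u i : 𝓔), oddSum K v u⁆ * ι K (v i) ⊗ₜ[K] (1 : U) = -(2 • oddSum K v u ^ 2) := by
  set ξ := oddSum K v u with hξ
  have hterm (i : I) : ⁅(1 ⊗ₜ u i : 𝓔), ξ⁆ * ι K (v i) ⊗ₜ[K] (1 : U) =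
      -((1 ⊗ₜ u i * ι K (v i) ⊗ₜ[K] (1 : U)) * ξ + ξ * (1 ⊗ₜ u i * ι K (v i) ⊗ₜ[K] (1 : U))) := by
    rw [Ring.lie_def, sub_mul, mul_assoc, hξ, ← neg_eq_iff_eq_neg.mpr (ι_tmul_one_mul_oddSum _ v u)]
    noncomm_ring
  simp only [hterm, sum_neg_distrib, sum_add_distrib, ← sum_mul, ← mul_sum,
    sum_ι_tmul_one_mul_one_tmul, ← hξ, ← sq, two_nsmul]

theorem oddSum_pow_succ_eq_add_powDeriv [DecidableEq I] (v : I → M) (u : I → U) (i : I) (n : ℕ) :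
    oddSum K v u ^ (n + 1) =
      oddSum K v (Function.update u i 0) ^ (n + 1) +
        powDeriv K (oddSum K v (Function.update u i 0)) n (ι K (v i) ⊗ₜ 1 * 1 ⊗ₜ u i) := by
  set ξ := oddSum K v (Function.update u i 0) with hξ
  have hu : oddSum K v u = ξ + ι K (v i) ⊗ₜ 1 * 1 ⊗ₜ u i := by
    rw [Algebra.TensorProduct.tmul_mul_tmul, mul_one, one_mul, add_comm, hξ, ← oddSum_update,
      Function.update_eq_self]
  rw [hu]
  have hθθ : ι K (v i) ⊗ₜ[K] (1 : U) * ι K (v i) ⊗ₜ 1 = 0 := by simp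
  have hθx : Commute (ι K (v i) ⊗ₜ[K] 1) (1 ⊗ₜ u i) := (Commute.one_right _).tmul (.one_left _)
  exact add_pow_succ_eq_add_powDeriv K
    (mul_mul_pow_mul_mul_eq_zero hθθ (ι_tmul_one_mul_oddSum _ _ _) hθx) n

end OddSum

section Recursion

variable {K M U I : Type*} [Field K] [CharZero K] [AddCommGroup M] [Module K M] [Ring U]
  [Algebra K U] [Fintype I] {S : Submodule K U} {v : I → M} {u : I → U}

local notation "𝓔" => ExteriorAlgebra K M ⊗[K] U

theorem nsmul_powDeriv_mul_pow_add_mul_oddSum_sq_eq_zero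
    (hU : ∀ x y z : U, Commute ⁅x, y⁆ z) (hS : ∀ x ∈ S, ∀ y ∈ S, ⁅x, y⁆ ∈ S)
    (hu : ∀ i, u i ∈ S) {θ ξ : 𝓔} {k m : ℕ}
    (h : ∀ x ∈ S, powDeriv K ξ k (θ * 1 ⊗ₜ x) * 1 ⊗ₜ x ^ (m + 1) = 0) {x : U} (hx : x ∈ S) :
    ((m + 1) • (powDeriv K ξ k (θ * 1 ⊗ₜ x) * 1 ⊗ₜ x ^ m) +
      powDeriv K ξ k θ * 1 ⊗ₜ x ^ (m + 1)) * oddSum K v u ^ 2 = 0 := by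
  have : IsAddTorsionFree 𝓔 := .of_isTorsionFree K _
  refine mul_oddSum_sq_eq_zero fun i l => ?_
  have hc (t : 𝓔) : Commute (1 ⊗ₜ ⁅u i, u l⁆) t := commute_one_tmul (hU _ _) t
  rw [← nsmul_mul_pow_mul_add_mul_pow_eq_zero (g := TensorProduct.mk K (ExteriorAlgebra K M) U 1)
    (f := powDeriv K ξ k ∘ₗ LinearMap.mulLeft K θ ∘ₗ TensorProduct.mk K (ExteriorAlgebra K M) U 1)
    h hx (hS _ (hu i) _ (hu l)) (hc _).symm]
  simp only [LinearMap.comp_apply, LinearMap.mulLeft_apply, TensorProduct.mk_apply,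
    powDeriv_mul_of_commute K (hc ξ).symm, add_mul, smul_mul_assoc, mul_assoc,
    (hc (1 ⊗ₜ x ^ (m + 1))).eq]

theorem powDeriv_oddSum_two_mul_add_three_mul_pow_eq_zero
    (hU : ∀ x y z : U, Commute ⁅x, y⁆ z) (hS : ∀ x ∈ S, ∀ y ∈ S, ⁅x, y⁆ ∈ S)
    (hu : ∀ i, u i ∈ S) {θ : 𝓔} (hθ : θ * oddSum K v u = -(oddSum K v u * θ))
    {n m : ℕ} (h : ∀ x ∈ S,
      powDeriv K (oddSum K v u) (2 * n + 1) (θ * 1 ⊗ₜ x) * 1 ⊗ₜ x ^ (m + 1) = 0)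
    {x : U} (hx : x ∈ S) :
    powDeriv K (oddSum K v u) (2 * n + 3) (θ * 1 ⊗ₜ x) * 1 ⊗ₜ x ^ m = 0 := by
  have : IsAddTorsionFree 𝓔 := .of_isTorsionFree K _
  have hδξ := lie_oddSum_mul_oddSum (K := K) hU v u x
  have hpolar := nsmul_powDeriv_mul_pow_add_mul_oddSum_sq_eq_zero (v := v) hU hS hu h hx
  have hθ_zero : powDeriv K (oddSum K v u) (2 * n + 1) θ = 0 := by
    have hone := powDeriv_two_mul_add_one (x := 1) K hθ (by simp [Ring.lie_def]) n
    simpa [Ring.lie_def] using hone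
  rw [hθ_zero, zero_mul, add_zero, smul_mul_assoc, nsmul_eq_zero_iff_right m.succ_ne_zero,
    powDeriv_two_mul_add_one K hθ hδξ, smul_mul_assoc, smul_mul_assoc,
    nsmul_eq_zero_iff_right n.succ_ne_zero, mul_assoc,
    ← ((commute_sq_of_lie_anticommute hδξ).pow_right m).eq, ← mul_assoc, mul_assoc _ (_ ^ n),
    ← pow_succ] at hpolar
  rw [show 2 * n + 3 = 2 * (n + 1) + 1 by ring, powDeriv_two_mul_add_one K hθ hδξ, smul_mul_assoc,
    hpolar, smul_zero]

theorem powDeriv_oddSum_two_mul_add_two_mul_pow_eq_zero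
    (hU : ∀ x y z : U, Commute ⁅x, y⁆ z) (hS : ∀ x ∈ S, ∀ y ∈ S, ⁅x, y⁆ ∈ S)
    (hu : ∀ i, u i ∈ S) {θ : 𝓔} (hθ : θ * oddSum K v u = -(oddSum K v u * θ))
    {n m : ℕ} (h : ∀ x ∈ S,
      powDeriv K (oddSum K v u) (2 * n) (θ * 1 ⊗ₜ x) * 1 ⊗ₜ x ^ (m + 1) = 0)
    {x : U} (hx : x ∈ S) :
    powDeriv K (oddSum K v u) (2 * n + 2) (θ * 1 ⊗ₜ x) * 1 ⊗ₜ x ^ m = 0 := by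
  have : IsAddTorsionFree 𝓔 := .of_isTorsionFree K _
  have hδξ (y : U) := lie_oddSum_mul_oddSum (K := K) hU v u y
  have hδδ (y : U) := lie_oddSum_mul_self (K := K) hU v u y
  have hδx (y : U) := commute_lie_oddSum (K := K) hU v u y
  have hpolar := nsmul_powDeriv_mul_pow_add_mul_oddSum_sq_eq_zero (v := v) hU hS hu h hx
  rw [powDeriv_two_mul_of_anticommute K hθ, add_mul, smul_mul_assoc, mul_assoc _ (_ ^ (m + 1)),
    ← ((commute_sq_of_lie_anticommute (hδξ x)).pow_right (m + 1)).eq, ← mul_assoc,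
    mul_assoc θ, ← pow_succ] at hpolar
  have hlie (y : U) (hy : y ∈ S) :=
    lie_mul_pow_mul_pow_eq_zero_of_powDeriv K hθ (hδξ y) (hδδ y) (hδx y) (h y hy)
  have hlie_polar := mul_lie_mul_powDeriv_eq_of_forall
    (g := TensorProduct.mk K (ExteriorAlgebra K M) U 1)
    (e := fun i => ExteriorAlgebra.ι K (v i) ⊗ₜ 1) hu
    (fun y i => (Commute.one_left _).tmul (.one_right y))
    (fun i => commute_sq_of_anticommute (ι_tmul_one_mul_oddSum (v i) v u))
    (sum_ι_tmul_one_mul_one_tmul v u) (sum_lie_oddSum_mul_ι_tmul_one v u) hlie hx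
  exact powDeriv_two_mul_add_two_mul_pow_eq_zero K hθ (hδξ x) hpolar
    (nsmul_mul_lie_mul_pow_add_eq_zero K (hδξ x) (hδδ x) (hδx x) hlie_polar)

theorem powDeriv_oddSum_add_two_mul_pow_eq_zero
    (hU : ∀ x y z : U, Commute ⁅x, y⁆ z) (hS : ∀ x ∈ S, ∀ y ∈ S, ⁅x, y⁆ ∈ S)
    (hu : ∀ i, u i ∈ S) {θ : 𝓔} (hθ : θ * oddSum K v u = -(oddSum K v u * θ))
    {k m : ℕ} (h : ∀ x ∈ S, powDeriv K (oddSum K v u) k (θ * 1 ⊗ₜ x) * 1 ⊗ₜ x ^ (m + 1) = 0)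
    {x : U} (hx : x ∈ S) :
    powDeriv K (oddSum K v u) (k + 2) (θ * 1 ⊗ₜ x) * 1 ⊗ₜ x ^ m = 0 := by
  obtain ⟨n, rfl | rfl⟩ := k.even_or_odd'
  · exact powDeriv_oddSum_two_mul_add_two_mul_pow_eq_zero hU hS hu hθ h hx
  · exact powDeriv_oddSum_two_mul_add_three_mul_pow_eq_zero hU hS hu hθ h hx

end Recursion

section Descent

open ExteriorAlgebra

variable {K U : Type*} [Field K] [CharZero K] [Ring U] [Algebra K U]

theorem stdAlt_mul_pow_eq_zero {S : Submodule K U} (hU : ∀ x y z : U, Commute ⁅x, y⁆ z)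
    (hS : ∀ x ∈ S, ∀ y ∈ S, ⁅x, y⁆ ∈ S) {k m : ℕ}
    (h : ∀ x : Fin (k + 1) → U, (∀ i, x i ∈ S) → stdAlt K U (k + 1) x * x 0 ^ (m + 1) = 0)
    {y : Fin (k + 3) → U} (hy : ∀ i, y i ∈ S) : stdAlt K U (k + 3) y * y 0 ^ m = 0 := by
  let b := Pi.basisFun K (Fin (k + 3))
  have : IsAddTorsionFree (ExteriorAlgebra K (Fin (k + 3) → K) ⊗[K] U) := .of_isTorsionFree K _
  have hu (i) : Function.update y 0 0 i ∈ S := by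
    rcases eq_or_ne i 0 with rfl | hi <;> simp [*]
  have hk (x : U) (hx : x ∈ S) : powDeriv K (oddSum K b (Function.update y 0 0)) k
      (ι K (b 0) ⊗ₜ 1 * 1 ⊗ₜ x) * 1 ⊗ₜ x ^ (m + 1) = 0 := by
    have hx_mem (i) : Function.update y 0 x i ∈ S := by
      rcases eq_or_ne i 0 with rfl | hi <;> simp [*]
    have hdiff := oddSum_pow_sub_mul_pow_eq_zero h b hx_mem 0
    rwa [oddSum_pow_succ_eq_add_powDeriv b _ 0, add_sub_cancel_left, Function.update_idem,
      Function.update_self] at hdiff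
  have hθ := ι_tmul_one_mul_oddSum (K := K) (b 0) b (Function.update y 0 0)
  have hk_two := powDeriv_oddSum_add_two_mul_pow_eq_zero hU hS hu hθ hk (hy 0)
  have hξ : oddSum K b (Function.update y 0 0) ^ (k + 3) = 0 := by
    rw [oddSum_pow_eq_ιMulti_tmul_stdAlt, (stdAlt K U _).map_coord_zero 0 (by simp), tmul_zero]
  have hpow := oddSum_pow_succ_eq_add_powDeriv (K := K) b y 0 (k + 2)
  rw [hξ, zero_add, oddSum_pow_eq_ιMulti_tmul_stdAlt] at hpow
  refine eq_zero_of_ιMulti_basis_tmul_eq_zero b ?_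
  rw [← hk_two, ← hpow, Algebra.TensorProduct.tmul_pow, Algebra.TensorProduct.tmul_mul_tmul,
    one_pow, mul_one]

end Descent

section Unitization

variable {K A U : Type*} [CommRing K] [NonUnitalRing A] [Module K A] [Ring U] [Algebra K U]

theorem map_powSucc (j : A →ₙₐ[K] U) (x : A) (n : ℕ) : j (powSucc x n) = j x ^ (n + 1) := by
  induction n with
  | zero => simp [powSucc]
  | succ n ih => rw [powSucc, map_mul, ih, ← pow_succ]

theorem map_prodTuple (j : A →ₙₐ[K] U) {n : ℕ} (x : Fin (n + 1) → A) :
    j (prodTuple x) = (List.ofFn (j ∘ x)).prod := by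
  have hfoldl (l : List A) (a : A) : j (l.foldl (· * ·) a) = j a * (l.map j).prod := by
    induction l generalizing a with
    | nil => simp
    | cons b l ih => rw [List.foldl_cons, ih, map_mul, List.map_cons, List.prod_cons, mul_assoc]
  rw [prodTuple, hfoldl, List.map_ofFn, List.ofFn_succ, List.prod_cons]
  rfl

theorem map_stdPoly (j : A →ₙₐ[K] U) {n : ℕ} (x : Fin (n + 1) → A) :
    j (stdPoly x) = stdAlt K U (n + 1) (j ∘ x) := by
  simp only [stdPoly, stdAlt, map_sum, map_zsmul, map_prodTuple,
    MultilinearMap.alternatization_apply, MultilinearMap.domDomCongr_apply,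
    MultilinearMap.mkPiAlgebraFin_apply, Units.smul_def]
  rfl

theorem commute_lie_unitization [SMulCommClass K A A] [IsScalarTower K A A]
    (h : ∀ x y z : A, Commute (x * y - y * x) z) (x y z : Unitization K A) : Commute ⁅x, y⁆ z := by
  have hK (r : K) (t : Unitization K A) : Commute t (.inl r) := by
    rw [← Unitization.algebraMap_eq_inl]
    exact (Algebra.commutes r t).symm
  cases x with | inl_add_inr r a =>
  cases y with | inl_add_inr s b =>
  cases z with | inl_add_inr t c =>
  have hlie : ⁅(.inl r + a : Unitization K A), (.inl s + b : Unitization K A)⁆ =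
      (a * b - b * a : A) := by
    simp only [Ring.lie_def, add_mul, mul_add, (hK r b).eq, (hK s a).eq, (hK r (.inl s)).eq,
      Unitization.inr_sub, Unitization.inr_mul]
    abel
  rw [hlie]
  refine (hK t _).add_right ?_
  rw [Commute, SemiconjBy, ← Unitization.inr_mul, (h a b c).eq, Unitization.inr_mul]

end Unitization

theorem inr_stdPoly_mul_pow_eq_zero {K A : Type*} [Field K] [CharZero K] [NonUnitalRing A]
    [Module K A] [SMulCommClass K A A] [IsScalarTower K A A] {k m : ℕ}
    (hA : ∀ x y z : A, Commute (x * y - y * x) z)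
    (h : ∀ x : Fin (k + 1) → A, stdPoly x * powSucc (x 0) m = 0) (x : Fin (k + 3) → A) :
    (.inr (stdPoly x) * .inr (x 0) ^ m : Unitization K A) = 0 := by
  let j := Unitization.inrNonUnitalAlgHom K A
  let S := LinearMap.range (j : A →ₗ[K] Unitization K A)
  have hS : ∀ a ∈ S, ∀ b ∈ S, ⁅a, b⁆ ∈ S := by
    rintro _ ⟨a, rfl⟩ _ ⟨b, rfl⟩
    exact ⟨a * b - b * a, by simp [Ring.lie_def]⟩
  have hstd (y : Fin (k + 1) → Unitization K A) (hy : ∀ i, y i ∈ S) :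
      stdAlt K _ (k + 1) y * y 0 ^ (m + 1) = 0 := by
    choose z hz using hy
    obtain rfl : j ∘ z = y := funext hz
    rw [← map_stdPoly j, Function.comp_apply, ← map_powSucc j, ← map_mul, h, map_zero]
  have hx : (.inr (stdPoly x) : Unitization K A) = stdAlt K _ (k + 3) (j ∘ x) := map_stdPoly j x
  rw [hx]
  exact stdAlt_mul_pow_eq_zero (commute_lie_unitization hA) hS hstd fun i => ⟨x i, rfl⟩

/-- Let `K` be a field of characteristic zero, `k, m ≥ 1`, and `A` an associative
(not necessarily unital) `K`-algebra with all commutators central which satisfies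
`S_{k+1}(x₁,…,x_{k+1}) * x₁^m = 0`. Then `A` satisfies
`S_{k+3}(x₁,…,x_{k+3}) * x₁^(m-1) = 0` (with `x₁⁰` omitted when `m = 1`). -/
theorem stmt_6 (K : Type*) [Field K] [CharZero K]
    (A : Type*) [NonUnitalRing A] [Module K A] [SMulCommClass K A A] [IsScalarTower K A A]
    (k m : ℕ) (hk : 1 ≤ k) (hm : 1 ≤ m)
    (hcomm : ∀ x y z : A, (x * y - y * x) * z - z * (x * y - y * x) = 0)
    (hS : ∀ x : Fin (k + 1) → A, stdPoly x * powSucc (x 0) (m - 1) = 0) :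
    (m = 1 → ∀ x : Fin (k + 3) → A, stdPoly x = 0) ∧
    (2 ≤ m → ∀ x : Fin (k + 3) → A, stdPoly x * powSucc (x 0) (m - 2) = 0) := by
  have hA (x y z : A) : Commute (x * y - y * x) z := sub_eq_zero.mp (hcomm x y z)
  have hU (x : Fin (k + 3) → A) := inr_stdPoly_mul_pow_eq_zero (K := K) hA hS x
  refine ⟨?_, fun hm_two x => Unitization.inr_injective (R := K) ?_⟩
  · rintro rfl x
    exact Unitization.inr_injective (R := K) (by simpa using hU x)
  · have hpow : (.inr (powSucc (x 0) (m - 2)) : Unitization K A) = .inr (x 0) ^ (m - 2 + 1) :=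
      map_powSucc (Unitization.inrNonUnitalAlgHom K A) (x 0) (m - 2)
    rw [Unitization.inr_mul, hpow, show m - 2 + 1 = m - 1 by lia, hU, Unitization.inr_zero]
end

section
/- Let K be a field of characteristic zero, let n ≥ 1, and let A be an associative (not necessarily unital) K-algebra satisfying the standard identity S₃(x,y,z) = 0 for all x, y, z ∈ A and xⁿ = 0 for all x ∈ A. Then every product of n + 1 elements of A vanishes: x₁x₂⋯x₊₁ = 0 for all x₁, …, x₊₁ ∈ A. In particular, for n = 3 one has (xy − yx)² = 0 for all x, y ∈ A. -/
/-!
`S₃ = 0` says that `x ⁅y, z⁆ + y ⁅z, x⁆ + z ⁅x, y⁆ = 0`. Substituting products for letters and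
dividing by two gives `x ⁅b, c⁆ w = ⁅b, c⁆ ⁅x, w⁆`, from which `⁅A, A⁆ A ⁅A, A⁆ = 0` and then
`⁅A, A⁆ ⁅A, A⁆ A = 0`. Hence in a product of at least five factors all but the first and the last
may be permuted freely.

Let `n ≥ 4`. The product `x a₂ ⋯ aₙ z` is then a symmetric multilinear function of the `aᵢ`, so it
vanishes as soon as `x yⁿ⁻¹ z` does. The linearization `D w = ∑ yⁱ w yʲ` (over `i + j = n - 1`) of
`yⁿ` vanishes identically, and `D x * z = 0`, `x * D z = 0`, `D (x z) = 0` and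
`⁅y, x⁆ yⁿ⁻³ ⁅y, z⁆ = 0` become four linear relations between the monomials `x yⁿ⁻¹ z`,
`y x yⁿ⁻² z`, `x yⁿ⁻² z y` and `y x yⁿ⁻³ z y`, a combination of which is `n x yⁿ⁻¹ z = 0`. The
cases `n ≤ 3` are elementary.
-/

section Polarization

variable {R M N ι : Type*} [Semiring R] [AddCommMonoid M] [Module R M] [AddCommGroup N] [Module R N]

-- Inclusion-exclusion over the values omitted by `r : ι → ι` in the expansion of `F (∑ i, a i, …)`.
theorem multilinearMap_sum_perm_eq_zero_of_diagonal [Fintype ι] [DecidableEq ι]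
    (F : MultilinearMap R (fun _ : ι ↦ M) N) (hF : ∀ x, F (fun _ ↦ x) = 0) (a : ι → M) :
    ∑ σ : Equiv.Perm ι, F (a ∘ σ) = 0 := by
  let omitting (i : ι) : Finset (ι → ι) := Fintype.piFinset fun _ ↦ {i}ᶜ
  have mem_inf_iff_bijective (r : ι → ι) :
      r ∈ Finset.univ.inf (fun i ↦ (omitting i)ᶜ) ↔ Function.Bijective r := by
    rw [← Finite.surjective_iff_bijective]
    simp only [omitting, Finset.mem_inf, Finset.mem_univ, Finset.mem_compl, Fintype.mem_piFinset,
      Finset.mem_singleton, forall_const, not_forall, not_not, Function.Surjective]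
  have inf_omitting (t : Finset ι) : t.inf omitting = Fintype.piFinset fun _ ↦ tᶜ := by
    ext r
    simp only [omitting, Finset.mem_inf, Fintype.mem_piFinset, Finset.mem_compl,
      Finset.mem_singleton]
    grind
  calc ∑ σ : Equiv.Perm ι, F (a ∘ σ)
      = ∑ r ∈ Finset.univ.inf (fun i ↦ (omitting i)ᶜ), F (a ∘ r) :=
        Finset.sum_bij' (fun σ _ ↦ σ) (fun r hr ↦ .ofBijective r ((mem_inf_iff_bijective r).1 hr))
          (fun σ _ ↦ (mem_inf_iff_bijective σ).2 σ.bijective) (by simp)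
          (fun _ _ ↦ Equiv.ext fun _ ↦ rfl) (fun _ _ ↦ rfl) (fun _ _ ↦ rfl)
    _ = ∑ t : Finset ι, (-1) ^ t.card • F (fun _ ↦ ∑ i ∈ tᶜ, a i) := by
        simp only [Finset.inclusion_exclusion_sum_inf_compl, Finset.powerset_univ, inf_omitting,
          F.map_sum_finset, Function.comp_def]
    _ = 0 := by simp only [hF, smul_zero, Finset.sum_const_zero]

theorem multilinearMap_eq_zero_of_symmetric_of_diagonal [Finite ι] [IsAddTorsionFree N]
    {F : MultilinearMap R (fun _ : ι ↦ M) N} (hF : ∀ x, F (fun _ ↦ x) = 0)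
    (hsymm : ∀ (σ : Equiv.Perm ι) a, F (a ∘ σ) = F a) : F = 0 := by
  classical
  have := Fintype.ofFinite ι
  ext a
  have h := multilinearMap_sum_perm_eq_zero_of_diagonal F hF a
  simp only [hsymm, Finset.sum_const, Finset.card_univ] at h
  exact (smul_eq_zero_iff_right Fintype.card_ne_zero).1 h

end Polarization

section NilIdentities

open Finset

theorem prod_ofFn_update_const {U : Type*} [Monoid U] (y w : U) {m : ℕ} (j : Fin (m + 1)) :
    (List.ofFn (Function.update (fun _ ↦ y) j w)).prod = y ^ (j : ℕ) * w * y ^ (m - j) := by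
  induction m with
  | zero => simp [Fin.fin_one_eq_zero j]
  | succ m ih =>
    cases j using Fin.cases with
    | zero => simp [List.ofFn_succ, Function.update_of_ne, List.ofFn_const, pow_succ']
    | succ j =>
      have tail_eq (i : Fin (m + 1)) : Function.update (fun _ ↦ y) j.succ w i.succ =
          Function.update (fun _ ↦ y) j w i := by
        simp [Function.update_apply]
      rw [List.ofFn_succ, List.prod_cons]
      simp only [tail_eq, ih]
      simp [Function.update_of_ne j.succ_ne_zero.symm, pow_succ', mul_assoc]

theorem sum_antidiagonal_pow_mul_mul_pow_eq_zero {G M U : Type*} [AddCommMonoid M] [Ring U]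
    [IsAddTorsionFree U] [FunLike G M U] [AddMonoidHomClass G M U] (f : G) {m : ℕ}
    (hf : ∀ x, f x ^ (m + 1) = 0) (y w : M) :
    ∑ ij ∈ antidiagonal m, f y ^ ij.1 * f w * f y ^ ij.2 = 0 := by
  let F := (MultilinearMap.mkPiAlgebraFin ℕ (m + 1) U).compLinearMap
    fun _ ↦ (f : M →+ U).toNatLinearMap
  let a : Fin (m + 1) → M := Function.update (fun _ ↦ y) 0 w
  have F_perm (σ : Equiv.Perm (Fin (m + 1))) :
      F (a ∘ ⇑σ⁻¹) = f y ^ (σ 0 : ℕ) * f w * f y ^ (m - σ 0) := by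
    have comp_eq : f ∘ a ∘ ⇑σ⁻¹ = Function.update (fun _ ↦ f y) (σ 0) (f w) := by
      rw [Function.update_comp_equiv, Function.comp_update]
      rfl
    rw [← prod_ofFn_update_const, ← comp_eq]
    rfl
  have h := multilinearMap_sum_perm_eq_zero_of_diagonal F (fun x ↦ by
    rw [← hf x, ← List.prod_replicate, ← List.ofFn_const]; rfl) a
  rw [← Equiv.sum_comp (Equiv.inv _)] at h
  simp only [Equiv.inv_apply, F_perm] at h
  -- Each value of `σ 0` is taken by `m !` permutations.
  rw [← Equiv.sum_comp Equiv.Perm.decomposeFin.symm, Fintype.sum_prod_type] at h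
  simp only [Equiv.Perm.decomposeFin_symm_apply_zero, sum_const, ← smul_sum] at h
  rw [smul_eq_zero_iff_right (by simp [Fintype.card_ne_zero])] at h
  rw [← h, Nat.sum_antidiagonal_eq_sum_range_succ fun i j ↦ f y ^ i * f w * f y ^ j, sum_range]

theorem mul_mul_eq_zero_of_mul_self_eq_zero {A : Type*} [NonUnitalRing A] [IsAddTorsionFree A]
    (h : ∀ x : A, x * x = 0) (x y z : A) : x * y * z = 0 := by
  have anticomm (a b : A) : a * b = -(b * a) := by
    have hab := h (a + b)
    rw [mul_add, add_mul, add_mul, h a, h b, zero_add, add_zero] at hab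
    exact eq_neg_of_add_eq_zero_right hab
  rw [← self_eq_neg]
  calc x * y * z = -(y * x * z) := by rw [anticomm x y, neg_mul]
    _ = y * z * x := by rw [mul_assoc, anticomm x z, mul_neg, neg_neg, mul_assoc]
    _ = -(x * y * z) := by rw [anticomm, mul_assoc]

end NilIdentities

/-- `A` satisfies the standard identity `S₃` of degree three. -/
def SatisfiesS₃ (A : Type*) [NonUnitalRing A] : Prop :=
  ∀ x y z : A, x * y * z + y * z * x + z * x * y - y * x * z - x * z * y - z * y * x = 0

namespace SatisfiesS₃

variable {A : Type*} [NonUnitalRing A]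

theorem mul_lie_cyclic (hA : SatisfiesS₃ A) (x y z : A) :
    x * ⁅y, z⁆ + y * ⁅z, x⁆ + z * ⁅x, y⁆ = 0 := by
  rw [← hA x y z]
  simp only [Ring.lie_def]
  noncomm_ring

theorem lie_mul_cyclic (hA : SatisfiesS₃ A) (x y z : A) :
    ⁅x, y⁆ * z + ⁅y, z⁆ * x + ⁅z, x⁆ * y = 0 := by
  rw [← hA x y z]
  simp only [Ring.lie_def]
  noncomm_ring

theorem mul_lie_mul_eq_sub (hA : SatisfiesS₃ A) (x b c w : A) :
    x * ⁅b, c⁆ * w = ⁅b, x⁆ * ⁅c, w⁆ - ⁅c, x⁆ * ⁅b, w⁆ := by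
  have h := hA (x * w) b c
  have hl := congrArg (· * w) (hA x b c)
  have hr := congrArg (x * ·) (hA w b c)
  simp only [Ring.lie_def, mul_add, add_mul, mul_sub, sub_mul, mul_assoc, mul_zero, zero_mul]
    at h hl hr ⊢
  linear_combination (norm := abel) hl + hr - h

variable [IsAddTorsionFree A]

theorem lie_mul_lie_cyclic (hA : SatisfiesS₃ A) (b c x w : A) :
    ⁅b, c⁆ * ⁅x, w⁆ + ⁅c, x⁆ * ⁅b, w⁆ + ⁅x, b⁆ * ⁅c, w⁆ = 0 := by
  have h := congrArg (· * w) (hA.mul_lie_cyclic x b c)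
  simp only [add_mul, hA.mul_lie_mul_eq_sub, zero_mul] at h
  rw [← smul_eq_zero_iff_right (two_ne_zero (α := ℕ)), ← neg_eq_zero, ← h]
  simp only [Ring.lie_def]
  noncomm_ring

theorem mul_lie_mul (hA : SatisfiesS₃ A) (x b c w : A) : x * ⁅b, c⁆ * w = ⁅b, c⁆ * ⁅x, w⁆ := by
  rw [hA.mul_lie_mul_eq_sub, ← sub_eq_zero, ← neg_eq_zero, ← hA.lie_mul_lie_cyclic b c x w]
  simp only [Ring.lie_def]
  noncomm_ring

theorem lie_mul_mul_lie (hA : SatisfiesS₃ A) (b c e x w : A) : ⁅b, c⁆ * e * ⁅x, w⁆ = 0 := by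
  have h : ⁅b, c⁆ * ⁅x, e * w⁆ = ⁅b, c⁆ * ⁅x, e⁆ * w := by
    rw [← hA.mul_lie_mul, ← hA.mul_lie_mul, mul_assoc _ e]
  rw [← sub_eq_zero.2 h]
  simp only [Ring.lie_def]
  noncomm_ring

theorem lie_mul_lie_mul_skew (hA : SatisfiesS₃ A) (b c x w y : A) :
    ⁅b, c⁆ * ⁅x, w⁆ * y = -(⁅b, c⁆ * ⁅y, w⁆ * x) := by
  calc ⁅b, c⁆ * ⁅x, w⁆ * y
      = ⁅b, c⁆ * ⁅x * y, w⁆ - ⁅b, c⁆ * x * ⁅y, w⁆ := by simp only [Ring.lie_def]; noncomm_ring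
    _ = x * (y * ⁅b, c⁆ * w) := by
      rw [hA.lie_mul_mul_lie, sub_zero, ← hA.mul_lie_mul]; noncomm_ring
    _ = ⁅b, c⁆ * ⁅x, ⁅y, w⁆⁆ := by rw [hA.mul_lie_mul, ← mul_assoc, hA.mul_lie_mul]
    _ = ⁅b, c⁆ * x * ⁅y, w⁆ - ⁅b, c⁆ * ⁅y, w⁆ * x := by rw [Ring.lie_def x]; noncomm_ring
    _ = -(⁅b, c⁆ * ⁅y, w⁆ * x) := by rw [hA.lie_mul_mul_lie, zero_sub]

-- Skewness in `x, w` and in `x, y` makes the left side invariant under rotation of `x, w, y`, so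
-- it is a third of the cyclic sum.
theorem lie_mul_lie_mul (hA : SatisfiesS₃ A) (b c x w y : A) : ⁅b, c⁆ * ⁅x, w⁆ * y = 0 := by
  have cyclic := congrArg (⁅b, c⁆ * ·) (hA.lie_mul_cyclic x w y)
  have rotate (u v t : A) : ⁅b, c⁆ * ⁅u, v⁆ * t = ⁅b, c⁆ * ⁅v, t⁆ * u := by
    rw [hA.lie_mul_lie_mul_skew]
    simp only [Ring.lie_def]
    noncomm_ring
  simp only [mul_add, ← mul_assoc, mul_zero, ← rotate x w y, rotate y x w] at cyclic
  rw [← smul_eq_zero_iff_right (three_ne_zero (α := ℕ)), ← cyclic]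
  abel

theorem mul_mul_lie_mul (hA : SatisfiesS₃ A) (x y b c w : A) : x * y * ⁅b, c⁆ * w = 0 := by
  calc x * y * ⁅b, c⁆ * w
      = ⁅b, c⁆ * x * ⁅y, w⁆ + ⁅b, c⁆ * ⁅x, w⁆ * y := by
        rw [hA.mul_lie_mul]; simp only [Ring.lie_def]; noncomm_ring
    _ = 0 := by rw [hA.lie_mul_mul_lie, hA.lie_mul_lie_mul, add_zero]

theorem mul_lie_mul_mul (hA : SatisfiesS₃ A) (x b c y w : A) : x * ⁅b, c⁆ * y * w = 0 := by
  rw [hA.mul_lie_mul, hA.lie_mul_lie_mul]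

end SatisfiesS₃

section MapToUnital

variable {A U F : Type*} [Mul A] [Monoid U] [FunLike F A U] [MulHomClass F A U] (f : F)

theorem map_powSucc_s7 (x : A) (k : ℕ) : f (powSucc x k) = f x ^ (k + 1) := by
  induction k with
  | zero => simp [powSucc]
  | succ k ih => rw [powSucc, map_mul, ih, ← pow_succ]

theorem map_foldl_mul (x : A) (l : List A) :
    f (l.foldl (· * ·) x) = f x * (l.map f).prod := by
  induction l generalizing x with
  | nil => simp
  | cons a l ih => simp [ih, mul_assoc]

theorem exists_prod_map_mul_map_eq_map (l : List A) (z : A) :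
    ∃ a, (l.map f).prod * f z = f a := by
  induction l with
  | nil => exact ⟨z, by simp⟩
  | cons b l ih =>
    obtain ⟨a, ha⟩ := ih
    exact ⟨b * a, by simp [mul_assoc, ha]⟩

end MapToUnital

namespace SatisfiesS₃

variable {A U : Type*} [NonUnitalRing A] [IsAddTorsionFree A] [Ring U] (f : A →ₙ+* U)

theorem map_mul_prod_mul_lie_mul_prod_mul_map (hA : SatisfiesS₃ A) (x a b z : A) {p q : List A}
    (h : p ≠ [] ∨ q ≠ []) :
    f x * (p.map f).prod * ⁅f a, f b⁆ * ((q.map f).prod * f z) = 0 := by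
  have map_lie : ⁅f a, f b⁆ = f ⁅a, b⁆ := by simp [Ring.lie_def]
  obtain ⟨z', hz'⟩ := exists_prod_map_mul_map_eq_map f q z
  match p, q, h with
  | e :: p, q, _ =>
    rw [List.map_cons, List.prod_cons, ← map_foldl_mul, map_lie, hz', ← map_mul, ← map_mul,
      ← map_mul, hA.mul_mul_lie_mul, map_zero]
  | [], e :: q, _ =>
    obtain ⟨w, hw⟩ := exists_prod_map_mul_map_eq_map f q z
    rw [List.map_cons, List.prod_cons, mul_assoc (f e), hw, List.map_nil, List.prod_nil, mul_one,
      map_lie, ← mul_assoc, ← map_mul, ← map_mul, ← map_mul, hA.mul_lie_mul_mul, map_zero]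

theorem map_mul_prod_append_mul_map_eq_of_perm (hA : SatisfiesS₃ A) (x z : A) {l l' : List A}
    (h : l.Perm l') (p : List A) (hp : 3 ≤ p.length + l.length) :
    f x * ((p ++ l).map f).prod * f z = f x * ((p ++ l').map f).prod * f z := by
  induction h generalizing p with
  | nil => rfl
  | cons a _ ih => simpa using ih (p ++ [a]) (by grind)
  | trans h₁ _ ih₁ ih₂ => rw [ih₁ p hp, ih₂ p (by rwa [← h₁.length_eq])]
  | swap a b l =>
    have hpl : p ≠ [] ∨ l ≠ [] := by grind
    rw [← sub_eq_zero, ← hA.map_mul_prod_mul_lie_mul_prod_mul_map f x b a z hpl]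
    simp only [Ring.lie_def, List.map_append, List.map_cons, List.prod_append, List.prod_cons]
    noncomm_ring

theorem map_mul_prod_mul_map_eq_of_perm (hA : SatisfiesS₃ A) (x z : A) {l l' : List A}
    (h : l.Perm l') (hl : 3 ≤ l.length) :
    f x * (l.map f).prod * f z = f x * (l'.map f).prod * f z :=
  hA.map_mul_prod_append_mul_map_eq_of_perm f x z h [] (by simpa)

theorem map_mul_gather_pow_mul_map (hA : SatisfiesS₃ A) (x y z : A) (l l' : List A) (i j : ℕ)
    (h : 3 ≤ i + j + l.length + l'.length) :
    f x * (f y ^ i * (l.map f).prod * f y ^ j * (l'.map f).prod) * f z =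
      f x * (f y ^ (i + j) * (l.map f).prod * (l'.map f).prod) * f z := by
  have perm : (List.replicate i y ++ l ++ List.replicate j y ++ l').Perm
      (List.replicate (i + j) y ++ l ++ l') := by
    simp only [List.replicate_add, List.append_assoc]
    exact (List.perm_append_comm_assoc l _ l').append_left _
  simpa [mul_assoc] using hA.map_mul_prod_mul_map_eq_of_perm f x z perm (by grind)

section NilIndexAtLeastFour

open Finset

-- The nil index `n` is written `m + 4`, so that no subtraction occurs in the exponents.
variable {m : ℕ}

theorem pow_relation_of_lie_mul_pow_mul_lie (hA : SatisfiesS₃ A) (x y z : A) :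
    f y * (f y ^ (m + 2) * f x) * f z + f x * (f y ^ (m + 2) * f z) * f y =
      f x * f y ^ (m + 3) * f z + f y * (f y ^ (m + 1) * f x * f z) * f y := by
  have h : f (⁅y, x⁆ * powSucc y m * ⁅y, z⁆) = 0 := by rw [hA.lie_mul_mul_lie, map_zero]
  have hyx : f y * (f x * f y ^ (m + 1) * f y) * f z = f y * (f y ^ (m + 2) * f x) * f z := by
    simpa [pow_succ, mul_assoc] using
      hA.map_mul_gather_pow_mul_map f y y z [x] [] 0 (m + 2) (by simp)
  have hxz : f y * (f x * f y ^ (m + 1) * f z) * f y = f y * (f y ^ (m + 1) * f x * f z) * f y := by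
    simpa using hA.map_mul_gather_pow_mul_map f y y y [x] [z] 0 (m + 1) (by simp)
  have pow_add_three : f y ^ (m + 3) = f y * f y ^ (m + 1) * f y := by
    rw [← pow_succ', ← pow_succ]
  rw [← hyx, ← hxz, pow_add_three, pow_succ' (f y) (m + 1), ← sub_eq_zero, ← h]
  simp only [Ring.lie_def, map_mul, map_sub, map_powSucc_s7]
  noncomm_ring

variable [IsAddTorsionFree U] (hf : ∀ a, f a ^ (m + 4) = 0)
include hf

theorem pow_relation_of_linearization_mul (hA : SatisfiesS₃ A) (x y z : A) :
    f x * f y ^ (m + 3) * f z + (m + 3) • (f y * (f y ^ (m + 2) * f x) * f z) = 0 := by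
  have gather {i j : ℕ} (h : i + j = m + 2) :
      f y ^ (i + 1) * f x * f y ^ j * f z = f y * (f y ^ (m + 2) * f x) * f z := by
    simpa [pow_succ', mul_assoc, h] using
      hA.map_mul_gather_pow_mul_map f y y z [x] [] i j (by simp [h])
  have nil_lin := congrArg (· * f z) (sum_antidiagonal_pow_mul_mul_pow_eq_zero f hf y x)
  rw [Nat.sum_antidiagonal_succ, add_mul, sum_mul,
    sum_congr rfl fun _ h ↦ gather (mem_antidiagonal.1 h)] at nil_lin
  simpa only [sum_const, Nat.card_antidiagonal, pow_zero, one_mul, zero_mul] using nil_lin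

theorem pow_relation_of_mul_linearization (hA : SatisfiesS₃ A) (x y z : A) :
    f x * f y ^ (m + 3) * f z + (m + 3) • (f x * (f y ^ (m + 2) * f z) * f y) = 0 := by
  have gather {i j : ℕ} (h : i + j = m + 2) :
      f x * (f y ^ i * f z * f y ^ (j + 1)) = f x * (f y ^ (m + 2) * f z) * f y := by
    simpa [pow_succ, mul_assoc, h] using
      hA.map_mul_gather_pow_mul_map f x y y [z] [] i j (by simp [h])
  have nil_lin := congrArg (f x * ·) (sum_antidiagonal_pow_mul_mul_pow_eq_zero f hf y z)
  rw [Nat.sum_antidiagonal_succ', mul_add, mul_sum,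
    sum_congr rfl fun _ h ↦ gather (mem_antidiagonal.1 h)] at nil_lin
  simpa only [sum_const, Nat.card_antidiagonal, pow_zero, mul_one, mul_zero, ← mul_assoc]
    using nil_lin

theorem pow_relation_of_linearization_at_mul (hA : SatisfiesS₃ A) (x y z : A) :
    f y * (f y ^ (m + 2) * f x) * f z + f x * (f y ^ (m + 2) * f z) * f y +
      (m + 2) • (f y * (f y ^ (m + 1) * f x * f z) * f y) = 0 := by
  have gather {i j : ℕ} (h : i + j = m + 1) :
      f y ^ (i + 1) * f (x * z) * f y ^ (j + 1) =
        f y * (f y ^ (m + 1) * f x * f z) * f y := by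
    rw [pow_succ', pow_succ]
    simpa [mul_assoc, h] using hA.map_mul_gather_pow_mul_map f y y y [x, z] [] i j (by simp [h])
  have first_term : f (x * z) * f y ^ (m + 3) = f x * (f y ^ (m + 2) * f z) * f y := by
    simpa [pow_succ, mul_assoc] using
      hA.map_mul_gather_pow_mul_map f x y y [z] [] 0 (m + 2) (by simp)
  have last_term : f y ^ (m + 3) * f (x * z) = f y * (f y ^ (m + 2) * f x) * f z := by
    rw [pow_succ', map_mul]
    noncomm_ring
  have nil_lin := sum_antidiagonal_pow_mul_mul_pow_eq_zero f hf y (x * z)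
  rw [Nat.sum_antidiagonal_succ, Nat.sum_antidiagonal_succ',
    sum_congr rfl fun _ h ↦ gather (mem_antidiagonal.1 h)] at nil_lin
  simp only [sum_const, Nat.card_antidiagonal, pow_zero, mul_one, one_mul, first_term, last_term]
    at nil_lin
  rw [← nil_lin]
  abel

theorem map_mul_pow_mul_map_eq_zero (hA : SatisfiesS₃ A) (x y z : A) :
    f x * f y ^ (m + 3) * f z = 0 := by
  have h : (m + 4) • (f x * f y ^ (m + 3) * f z) = 0 := by
    linear_combination (norm := module) hA.pow_relation_of_linearization_mul f hf x y z +
      hA.pow_relation_of_mul_linearization f hf x y z -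
      hA.pow_relation_of_linearization_at_mul f hf x y z -
      (m + 2) • hA.pow_relation_of_lie_mul_pow_mul_lie f x y z
  exact (smul_eq_zero_iff_right (by simp)).1 h

theorem map_mul_prod_mul_map_eq_zero (hA : SatisfiesS₃ A) (x z : A) {l : List A}
    (hl : l.length = m + 3) : f x * (l.map f).prod * f z = 0 := by
  obtain ⟨a, rfl⟩ : ∃ a : Fin (m + 3) → A, List.ofFn a = l := hl ▸ ⟨l.get, List.ofFn_get l⟩
  let F : MultilinearMap ℕ (fun _ : Fin (m + 3) ↦ A) U :=
    (LinearMap.mulRight ℕ (f z) ∘ₗ LinearMap.mulLeft ℕ (f x)).compMultilinearMap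
      ((MultilinearMap.mkPiAlgebraFin ℕ (m + 3) U).compLinearMap
        fun _ ↦ (f : A →+ U).toNatLinearMap)
  have F_apply (b : Fin (m + 3) → A) : F b = f x * ((List.ofFn b).map f).prod * f z := by
    rw [List.map_ofFn]
    rfl
  have F_eq_zero : F = 0 := by
    refine multilinearMap_eq_zero_of_symmetric_of_diagonal (fun y ↦ ?_) fun σ b ↦ ?_
    · rw [F_apply, List.ofFn_const, List.map_replicate, List.prod_replicate,
        hA.map_mul_pow_mul_map_eq_zero f hf]
    · rw [F_apply, F_apply]
      exact hA.map_mul_prod_mul_map_eq_of_perm f x z (σ.ofFn_comp_perm b) (by simp)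
  rw [← F_apply, F_eq_zero, zero_apply]

end NilIndexAtLeastFour

theorem foldl_mul_eq_zero_of_injective [IsAddTorsionFree U] (hA : SatisfiesS₃ A) {m : ℕ}
    (f_inj : Function.Injective f) (hpow : ∀ a : A, powSucc a (m + 3) = 0) (x : A)
    {l : List A} (hl : l.length = m + 4) : l.foldl (· * ·) x = 0 := by
  have hf (a : A) : f a ^ (m + 4) = 0 := by rw [← map_powSucc_s7 f, hpow, map_zero]
  obtain rfl | ⟨l, z, rfl⟩ := l.eq_nil_or_concat'
  · simp at hl
  apply f_inj
  rw [map_foldl_mul, List.map_append, List.prod_append, List.map_singleton, List.prod_singleton,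
    ← mul_assoc, hA.map_mul_prod_mul_map_eq_zero f hf x z (by simpa using hl), map_zero]

section SmallNilIndex

theorem mul_mul_cyclic_of_cube_eq_zero (hA : SatisfiesS₃ A) (h : ∀ x : A, x * x * x = 0)
    (x y z : A) : x * y * z + y * z * x + z * x * y = 0 := by
  have polarized : x * y * z + y * z * x + z * x * y +
      (y * x * z + x * z * y + z * y * x) = 0 := by
    have hx := h x
    have hy := h y
    have hz := h z
    have hxy := h (x + y)
    have hyz := h (y + z)
    have hxz := h (x + z)
    have hxyz := h (x + y + z)
    simp only [mul_add, add_mul] at hxy hyz hxz hxyz ⊢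
    linear_combination (norm := abel) hxyz - hxy - hyz - hxz + hx + hy + hz
  rw [← smul_eq_zero_iff_right (two_ne_zero (α := ℕ))]
  linear_combination (norm := abel) polarized + hA x y z

theorem mul_mul_mul_eq_zero_of_cube_eq_zero (hA : SatisfiesS₃ A) (h : ∀ x : A, x * x * x = 0)
    (a b c d : A) : a * b * c * d = 0 := by
  have cyclic := hA.mul_mul_cyclic_of_cube_eq_zero h
  rw [← smul_eq_zero_iff_right (three_ne_zero (α := ℕ))]
  have habcd := cyclic (a * b) c d
  have hbcda := cyclic (b * c) d a
  have hcdab := cyclic (c * d) a b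
  have hdabc := cyclic (d * a) b c
  simp only [← mul_assoc] at habcd hbcda hcdab hdabc
  linear_combination (norm := abel) habcd + hbcda + hcdab - 2 • hdabc

end SmallNilIndex

theorem foldl_mul_eq_zero (hA : SatisfiesS₃ A) {k : ℕ} (hk : ∀ x : A, powSucc x k = 0) (x : A)
    {l : List A} (hl : l.length = k + 1) : l.foldl (· * ·) x = 0 := by
  match k, l, hl with
  | 0, [b], _ => exact hk _
  | 1, [b, c], _ => exact mul_mul_eq_zero_of_mul_self_eq_zero hk x b c
  | 2, [b, c, d], _ => exact hA.mul_mul_mul_eq_zero_of_cube_eq_zero hk x b c d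
  | m + 3, l, hl =>
    have : IsAddTorsionFree (Unitization ℤ A) :=
      (Unitization.addEquiv ℤ A).injective.isAddTorsionFree
        (Unitization.addEquiv ℤ A).toAddMonoidHom
    exact hA.foldl_mul_eq_zero_of_injective (U := Unitization ℤ A)
      (Unitization.inrNonUnitalAlgHom ℤ A) Unitization.inr_injective hk x hl

end SatisfiesS₃

theorem stmt_7_general (A : Type*) [NonUnitalRing A] [IsAddTorsionFree A] (n : ℕ) (hn : 1 ≤ n)
    (h1 : ∀ x y z : A,
      x * y * z + y * z * x + z * x * y - y * x * z - x * z * y - z * y * x = 0)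
    (h2 : ∀ x : A, powSucc x (n - 1) = 0) :
    (∀ (x : A) (l : List A), l.length = n → l.foldl (· * ·) x = 0) ∧
    (n = 3 → ∀ x y : A, (x * y - y * x) * (x * y - y * x) = 0) := by
  have hA : SatisfiesS₃ A := h1
  have foldl_eq_zero (x : A) (l : List A) (hl : l.length = n) : l.foldl (· * ·) x = 0 :=
    hA.foldl_mul_eq_zero h2 x (by rw [hl, Nat.sub_add_cancel hn])
  refine ⟨foldl_eq_zero, ?_⟩
  rintro rfl x y
  have mul_eq_zero (a b c d : A) : a * b * c * d = 0 := foldl_eq_zero a [b, c, d] rfl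
  simp only [mul_sub, sub_mul, ← mul_assoc, mul_eq_zero, sub_zero]

/-- Let `K` be a field of characteristic zero, `n ≥ 1`, and `A` an associative
(not necessarily unital) `K`-algebra satisfying the standard identity
`S₃(x,y,z) = 0` and `x^n = 0`. Then every product of `n + 1` elements of `A`
vanishes; in particular for `n = 3` one has `(xy - yx)² = 0`. -/
theorem stmt_7 (K : Type*) [Field K] [CharZero K]
    (A : Type*) [NonUnitalRing A] [Module K A] [SMulCommClass K A A] [IsScalarTower K A A]
    (n : ℕ) (hn : 1 ≤ n)
    (h1 : ∀ x y z : A,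
      x * y * z + y * z * x + z * x * y - y * x * z - x * z * y - z * y * x = 0)
    (h2 : ∀ x : A, powSucc x (n - 1) = 0) :
    (∀ (x : A) (l : List A), l.length = n → l.foldl (· * ·) x = 0) ∧
    (n = 3 → ∀ x y : A, (x * y - y * x) * (x * y - y * x) = 0) := by
  have : IsAddTorsionFree A := .of_isTorsionFree K A
  exact stmt_7_general A n hn h1 h2
end

section
/- Let K be a field of characteristic zero and let A be an associative (not necessarily unital) K-algebra satisfying x³ = 0 for all x ∈ A. Then xy²x = yx²y for all x, y ∈ A. -/
/-!
Polarizing `x³ = 0` gives `(x²y + xyx + yx²) + (y²x + yxy + xy²) = 0`. At the pair `(x, yx²)` this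
collapses to `t + (xy)t = 0` for `t = x²yx²`, and `xy` is nilpotent, so `t = 0`. At `(x, y²)`
it then reads `x²y² + xy²x + y²x² = 0`. Hence both `xy²x` and, by symmetry, `yx²y` are additive
inverses of `x²y² + y²x²`.
-/

section NonUnitalSemiring

variable {A : Type*} [NonUnitalSemiring A]

theorem eq_zero_of_cube_eq_zero_of_add_mul_eq_zero {a t : A} (ha : a * a * a = 0)
    (hat : t + a * t = 0) : t = 0 := by
  have a_mul_hat : a * t + a * (a * t) = 0 := by rw [← mul_add, hat, mul_zero]
  have t_eq : t = a * (a * t) := left_neg_eq_right_neg hat a_mul_hat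
  have a_mul_t : a * t = 0 := by
    calc a * t = a * (a * (a * t)) := by rw [← t_eq]
      _ = a * a * a * t := by simp only [mul_assoc]
      _ = 0 := by rw [ha, zero_mul]
  rw [t_eq, a_mul_t, mul_zero]

theorem polarization_of_cube_eq_zero (h : ∀ x : A, x * x * x = 0) (x y : A) :
    (x * x * y + x * y * x + y * x * x) + (y * y * x + y * x * y + x * y * y) = 0 := by
  calc (x * x * y + x * y * x + y * x * x) + (y * y * x + y * x * y + x * y * y)
      = x * x * x + (x * x * y + x * y * x + y * x * x)
          + (y * y * x + y * x * y + x * y * y) + y * y * y := by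
        rw [h x, h y, zero_add, add_zero]
    _ = (x + y) * (x + y) * (x + y) := by
        simp only [add_mul, mul_add]
        abel
    _ = 0 := h (x + y)

theorem sq_mul_mul_sq_eq_zero_of_cube_eq_zero (h : ∀ x : A, x * x * x = 0) (x y : A) :
    x * x * y * (x * x) = 0 := by
  have cube_mul (z : A) : x * (x * (x * z)) = 0 := by
    rw [← mul_assoc, ← mul_assoc, h, zero_mul]
  have cube : x * (x * x) = 0 := by rw [← mul_assoc, h]
  refine eq_zero_of_cube_eq_zero_of_add_mul_eq_zero (h (x * y)) ?_
  simpa only [mul_assoc, cube_mul, cube, mul_zero, zero_mul, zero_add, add_zero] using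
    polarization_of_cube_eq_zero h x (y * (x * x))

theorem polarization_sq_of_cube_eq_zero (h : ∀ x : A, x * x * x = 0) (x y : A) :
    x * x * (y * y) + x * (y * y) * x + y * y * (x * x) = 0 := by
  have fourth_power : y * y * (y * y) = 0 := by rw [← mul_assoc, h, zero_mul]
  have sq_mul_sq : y * y * x * (y * y) = 0 := sq_mul_mul_sq_eq_zero_of_cube_eq_zero h y x
  have mul_fourth_power : x * (y * y) * (y * y) = 0 := by
    rw [mul_assoc, fourth_power, mul_zero]
  simpa only [fourth_power, sq_mul_sq, mul_fourth_power, zero_mul, add_zero, mul_assoc (y * y)]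
    using polarization_of_cube_eq_zero h x (y * y)

theorem stmt_8_general (h : ∀ x : A, x * x * x = 0) (x y : A) :
    x * (y * y) * x = y * (x * x) * y := by
  have left_inverse : x * (y * y) * x + (x * x * (y * y) + y * y * (x * x)) = 0 := by
    rw [← polarization_sq_of_cube_eq_zero h x y]
    abel
  have right_inverse : (x * x * (y * y) + y * y * (x * x)) + y * (x * x) * y = 0 := by
    rw [← polarization_sq_of_cube_eq_zero h y x]
    abel
  exact left_neg_eq_right_neg left_inverse right_inverse

end NonUnitalSemiring

/-- Let `K` be a field of characteristic zero and `A` an associative (not necessarily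
unital) `K`-algebra satisfying `x³ = 0`. Then `xy²x = yx²y` for all `x, y ∈ A`. -/
theorem stmt_8 (K : Type*) [Field K] [CharZero K]
    (A : Type*) [NonUnitalRing A] [Module K A] [SMulCommClass K A A] [IsScalarTower K A A]
    (h : ∀ x : A, x * x * x = 0) :
    ∀ x y : A, x * (y * y) * x = y * (x * x) * y :=
  stmt_8_general h
end

section
/- Let K be a field of characteristic zero and let A be an associative (not necessarily unital) K-algebra satisfying x³ = 0 for all x ∈ A. Then for all x, y ∈ A: x²yx + xyx² = 0, x²y² = yxyx, and xyxy = y²x². -/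
/-! Comparing the cubes of `x + y` and `x - y` isolates twice the component of `(x + y)³` that is
linear in `y`, up to a multiple of `y³`. Hence `x²y + xyx + yx² = 0` when cubes vanish and there is
no `2`-torsion. Multiplying this identity by `x` on the left gives the first relation. The other
two compare the identity for `x` and `y²` with the one for `y` and `x` multiplied by `x`, on the
right for `x²y² = yxyx` and on the left for `xyxy = y²x²`. -/

section CubeLinearization

variable {A : Type*}

/-- The partial linearization of the cube: the component of `(x + y)³` of degree two in `x` and
degree one in `y`. -/
def cubeLinearization [Mul A] [Add A] (x y : A) : A :=
  x * x * y + x * y * x + y * x * x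

section NonUnitalSemiring

variable [NonUnitalSemiring A]

theorem mul_cubeLinearization (x y : A) :
    x * cubeLinearization x y = x * x * x * y + (x * x * y * x + x * y * (x * x)) := by
  unfold cubeLinearization
  noncomm_ring

theorem cubeLinearization_mul_self_add_eq_cubeLinearization_mul_add (x y : A) :
    cubeLinearization x (y * y) + y * x * y * x =
      cubeLinearization y x * x + x * x * (y * y) := by
  unfold cubeLinearization
  noncomm_ring

theorem cubeLinearization_mul_self_add_eq_mul_cubeLinearization_add (x y : A) :
    cubeLinearization x (y * y) + x * y * x * y =
      x * cubeLinearization y x + y * y * (x * x) := by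
  unfold cubeLinearization
  noncomm_ring

end NonUnitalSemiring

section NonUnitalRing

variable [NonUnitalRing A]

theorem add_cube_sub_sub_cube (x y : A) :
    (x + y) * (x + y) * (x + y) - (x - y) * (x - y) * (x - y) =
      2 • (cubeLinearization x y + y * y * y) := by
  unfold cubeLinearization
  noncomm_ring

theorem cubeLinearization_eq_zero (two_regular : IsSMulRegular A (2 : ℕ))
    (cube_eq_zero : ∀ x : A, x * x * x = 0) (x y : A) : cubeLinearization x y = 0 := by
  refine two_regular.right_eq_zero_of_smul ?_
  simpa only [cube_eq_zero, sub_zero, add_zero] using (add_cube_sub_sub_cube x y).symm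

theorem stmt_10_general (two_regular : IsSMulRegular A (2 : ℕ))
    (cube_eq_zero : ∀ x : A, x * x * x = 0) (x y : A) :
    x * x * y * x + x * y * (x * x) = 0 ∧
      x * x * (y * y) = y * x * y * x ∧
      x * y * x * y = y * y * (x * x) := by
  have linearized := cubeLinearization_eq_zero two_regular cube_eq_zero
  refine ⟨?_, ?_, ?_⟩
  · simpa only [linearized, cube_eq_zero, mul_zero, zero_mul, zero_add]
      using (mul_cubeLinearization x y).symm
  · simpa only [linearized, zero_mul, zero_add]
      using (cubeLinearization_mul_self_add_eq_cubeLinearization_mul_add x y).symm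
  · simpa only [linearized, mul_zero, zero_add]
      using cubeLinearization_mul_self_add_eq_mul_cubeLinearization_add x y

end NonUnitalRing

end CubeLinearization

/-- Let `K` be a field of characteristic zero and `A` an associative (not necessarily
unital) `K`-algebra satisfying `x³ = 0`. Then `x²yx + xyx² = 0`, `x²y² = yxyx` and
`xyxy = y²x²` for all `x, y ∈ A`. -/
theorem stmt_10 (K : Type*) [Field K] [CharZero K]
    (A : Type*) [NonUnitalRing A] [Module K A] [SMulCommClass K A A] [IsScalarTower K A A]
    (h : ∀ x : A, x * x * x = 0) :
    ∀ x y : A,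
      x * x * y * x + x * y * (x * x) = 0 ∧
      x * x * (y * y) = y * x * y * x ∧
      x * y * x * y = y * y * (x * x) := by
  have : IsAddTorsionFree A := .of_isTorsionFree K A
  exact stmt_10_general (nsmul_right_injective two_ne_zero) h
end

section
/- Let K be a field of characteristic zero and let A be an associative (not necessarily unital) K-algebra satisfying x³ = 0 for all x ∈ A. Then x²yx² = 0 for all x, y ∈ A. -/
/-!
Write `T = x²yx²` and `p = yx²`. Since `px = yx³ = 0`, the only mixed terms surviving in
`(x + p)³` are `x²p` and `xp²`, so `(x + p)³ = 0` reads `T + (xy)T = 0`. As `(xy)³ = 0`, left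
multiplication by `1 + xy` is injective, hence `T = 0`.
-/

section NonUnitalSemiring

variable {R : Type*} [NonUnitalSemiring R]

theorem eq_zero_of_add_mul_eq_zero_of_cube_eq_zero {a b : R} (hb : b * b * b = 0)
    (h : a + b * a = 0) : a = 0 := by
  have hba_add : b * a + b * b * a = 0 := by
    simpa only [mul_add, mul_zero, mul_assoc] using congrArg (b * ·) h
  have hbba : b * b * a = 0 := by
    simpa only [mul_add, mul_zero, ← mul_assoc, hb, zero_mul, add_zero] using
      congrArg (b * b * ·) h
  have hba : b * a = 0 := by rwa [hbba, add_zero] at hba_add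
  rwa [hba, add_zero] at h

theorem add_cube_of_mul_eq_zero {x p : R} (hpx : p * x = 0) :
    (x + p) * (x + p) * (x + p) =
      x * x * x + (x * x * p + x * p * p) + p * p * p := by
  have sq_add : (x + p) * (x + p) = x * x + x * p + p * p := by
    rw [add_mul, mul_add, mul_add, hpx, zero_add]
  have mul_x : (x * x + x * p + p * p) * x = x * x * x := by
    simp only [add_mul, mul_assoc, hpx, mul_zero, add_zero]
  rw [sq_add, mul_add, mul_x, add_mul, add_mul, ← add_assoc]

theorem sq_mul_mul_sq_add_mul_eq_zero (h : ∀ x : R, x * x * x = 0) (x y : R) :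
    x * x * y * (x * x) + x * y * (x * x * y * (x * x)) = 0 := by
  have hpx : y * (x * x) * x = 0 := by rw [mul_assoc, h, mul_zero]
  have cube_expansion := add_cube_of_mul_eq_zero hpx
  rw [h, h, h, zero_add, add_zero] at cube_expansion
  simpa only [mul_assoc] using cube_expansion.symm

theorem stmt_11_general (h : ∀ x : R, x * x * x = 0) (x y : R) :
    x * x * y * (x * x) = 0 :=
  eq_zero_of_add_mul_eq_zero_of_cube_eq_zero (h (x * y)) (sq_mul_mul_sq_add_mul_eq_zero h x y)

end NonUnitalSemiring

/-- Let `K` be a field of characteristic zero and `A` an associative (not necessarily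
unital) `K`-algebra satisfying `x³ = 0`. Then `x²yx² = 0` for all `x, y ∈ A`. -/
theorem stmt_11 (K : Type*) [Field K] [CharZero K]
    (A : Type*) [NonUnitalRing A] [Module K A] [SMulCommClass K A A] [IsScalarTower K A A]
    (h : ∀ x : A, x * x * x = 0) :
    ∀ x y : A, x * x * y * (x * x) = 0 :=
  stmt_11_general h
end

section
/- Let K be a field of characteristic zero and let A be an associative (not necessarily unital) K-algebra satisfying x³ = 0 for all x ∈ A. Then for all x, y ∈ A: xyxyx = 0, x²y²x = −xy²x², x²y²x = xyx²y, x²y²x = −x²yxy, x²y²x = yxyx², and x²y²x = −yx²yx. -/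
/-!
Comparing `(x + y)³ = 0` with `(x - y)³ = 0` and cancelling `2` gives the polarized identity
`x²y + xyx + yx² = 0`. Multiplying it by `x` yields the exchange rule `x²yx = -xyx²`. The
degree-five identities are this rule together with `y²x + yxy + xy² = 0` multiplied by `x²` on
either side, or by `x` on both.
-/

section CubeZero

variable {A : Type*} [NonUnitalRing A]

theorem sq_mul_add_mul_mul_add_mul_sq_eq_zero (h2 : IsSMulRegular A (2 : ℕ))
    (h : ∀ x : A, x * x * x = 0) (x y : A) : x * x * y + x * y * x + y * (x * x) = 0 := by
  refine h2.right_eq_zero_of_smul ?_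
  calc 2 • (x * x * y + x * y * x + y * (x * x))
      = (x + y) * (x + y) * (x + y) - (x - y) * (x - y) * (x - y)
          - 2 • (y * y * y) := by noncomm_ring
    _ = 0 := by simp only [h, smul_zero, sub_zero]

theorem sq_mul_mul_eq_neg_mul_mul_sq (h2 : IsSMulRegular A (2 : ℕ))
    (h : ∀ x : A, x * x * x = 0) (x y : A) : x * x * y * x = -(x * y * (x * x)) := by
  refine eq_neg_of_add_eq_zero_left ?_
  calc x * x * y * x + x * y * (x * x)
      = x * (x * x * y + x * y * x + y * (x * x)) - x * x * x * y := by noncomm_ring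
    _ = 0 := by
      rw [sq_mul_add_mul_mul_add_mul_sq_eq_zero h2 h, h, mul_zero, zero_mul, sub_zero]

theorem mul_mul_mul_mul_self_eq_zero (h2 : IsSMulRegular A (2 : ℕ))
    (h : ∀ x : A, x * x * x = 0) (x y : A) : x * y * x * y * x = 0 := by
  calc x * y * x * y * x
      = x * (y * y * x + y * x * y + x * (y * y)) * x
          - (x * x * (y * y) * x + x * (y * y) * (x * x)) := by noncomm_ring
    _ = 0 := by
      rw [sq_mul_add_mul_mul_add_mul_sq_eq_zero h2 h, sq_mul_mul_eq_neg_mul_mul_sq h2 h,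
        neg_add_cancel, mul_zero, zero_mul, sub_zero]

theorem sq_mul_sq_mul_eq_neg_sq_mul_mul_mul (h2 : IsSMulRegular A (2 : ℕ))
    (h : ∀ x : A, x * x * x = 0) (x y : A) :
    x * x * (y * y) * x = -(x * x * y * x * y) := by
  refine eq_neg_of_add_eq_zero_left ?_
  calc x * x * (y * y) * x + x * x * y * x * y
      = x * x * (y * y * x + y * x * y + x * (y * y)) - x * x * x * (y * y) := by noncomm_ring
    _ = 0 := by
      rw [sq_mul_add_mul_mul_add_mul_sq_eq_zero h2 h, h, mul_zero, zero_mul, sub_zero]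

theorem mul_sq_mul_sq_eq_neg_mul_mul_mul_sq (h2 : IsSMulRegular A (2 : ℕ))
    (h : ∀ x : A, x * x * x = 0) (x y : A) :
    x * (y * y) * (x * x) = -(y * x * y * (x * x)) := by
  refine eq_neg_of_add_eq_zero_left ?_
  calc x * (y * y) * (x * x) + y * x * y * (x * x)
      = (y * y * x + y * x * y + x * (y * y)) * (x * x) - y * y * (x * x * x) := by noncomm_ring
    _ = 0 := by
      rw [sq_mul_add_mul_mul_add_mul_sq_eq_zero h2 h, h, mul_zero, zero_mul, sub_zero]

theorem stmt_12_general (h2 : IsSMulRegular A (2 : ℕ)) (h : ∀ x : A, x * x * x = 0) (x y : A) :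
    x * y * x * y * x = 0 ∧
    x * x * (y * y) * x = -(x * (y * y) * (x * x)) ∧
    x * x * (y * y) * x = x * y * (x * x) * y ∧
    x * x * (y * y) * x = -(x * x * y * x * y) ∧
    x * x * (y * y) * x = y * x * y * (x * x) ∧
    x * x * (y * y) * x = -(y * (x * x) * y * x) := by
  have exchange : ∀ z, x * x * z * x = -(x * z * (x * x)) := sq_mul_mul_eq_neg_mul_mul_sq h2 h x
  have left_sq := sq_mul_sq_mul_eq_neg_sq_mul_mul_mul h2 h x y
  have right_sq : x * x * (y * y) * x = y * x * y * (x * x) := by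
    rw [exchange, mul_sq_mul_sq_eq_neg_mul_mul_mul_sq h2 h, neg_neg]
  refine ⟨mul_mul_mul_mul_self_eq_zero h2 h x y, exchange (y * y), ?_, left_sq, right_sq, ?_⟩
  · rw [left_sq, exchange, neg_mul, neg_neg]
  · calc x * x * (y * y) * x = y * (x * y * (x * x)) := by rw [right_sq]; simp only [mul_assoc]
      _ = y * -(x * x * y * x) := by rw [exchange, neg_neg]
      _ = -(y * (x * x) * y * x) := by simp only [mul_neg, mul_assoc]

end CubeZero

/-- Let `K` be a field of characteristic zero and `A` an associative (not necessarily
unital) `K`-algebra satisfying `x³ = 0`. Then `xyxyx = 0` and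
`x²y²x = -xy²x² = xyx²y = -x²yxy = yxyx² = -yx²yx` for all `x, y ∈ A`. -/
theorem stmt_12 (K : Type*) [Field K] [CharZero K]
    (A : Type*) [NonUnitalRing A] [Module K A] [SMulCommClass K A A] [IsScalarTower K A A]
    (h : ∀ x : A, x * x * x = 0) :
    ∀ x y : A,
      x * y * x * y * x = 0 ∧
      x * x * (y * y) * x = -(x * (y * y) * (x * x)) ∧
      x * x * (y * y) * x = x * y * (x * x) * y ∧
      x * x * (y * y) * x = -(x * x * y * x * y) ∧
      x * x * (y * y) * x = y * x * y * (x * x) ∧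
      x * x * (y * y) * x = -(y * (x * x) * y * x) := by
  have : IsAddTorsionFree A := .of_isTorsionFree K A
  exact stmt_12_general (nsmul_right_injective two_ne_zero) h
end

section
/- Let K be a field of characteristic zero and let A be an associative (not necessarily unital) K-algebra satisfying x³ = 0 for all x ∈ A. Then xyxzx = 0 for all x, y, z ∈ A. -/
/-!
Polarizing `x³ = 0` gives `x²b + xbx + bx² = 0` for all `b`, and multiplying by `x` gives
`x²bx + xbx² = 0`. Take the first identity with `b = y` times `zx` on the right, with `b = z` times
`xy` on the left, and with `b = yxz`. The three sum to `3xyxzx` plus the six words with letters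
`x, x, x, y, z` in which `y` precedes `z` and exactly two `x`s are adjacent; these six cancel in
pairs by the second identity.
-/

section NonUnitalSemiring

variable {A : Type*} [NonUnitalSemiring A] {x : A}

theorem sq_mul_mul_add_mul_mul_sq_eq_zero (hx : x * x * x = 0)
    (hpolar : ∀ b, x * x * b + x * b * x + b * (x * x) = 0) (b : A) :
    x * x * b * x + x * b * (x * x) = 0 :=
  calc x * x * b * x + x * b * (x * x)
      = x * x * x * b + (x * x * b * x + x * b * (x * x)) := by rw [hx, zero_mul, zero_add]
    _ = x * (x * x * b + x * b * x + b * (x * x)) := by simp only [mul_add, mul_assoc, add_assoc]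
    _ = 0 := by rw [hpolar, mul_zero]

theorem three_nsmul_mul_mul_mul_mul_eq_zero (hx : x * x * x = 0)
    (hpolar : ∀ b, x * x * b + x * b * x + b * (x * x) = 0) (y z : A) :
    3 • (x * y * x * z * x) = 0 := by
  have hcancel := sq_mul_mul_add_mul_mul_sq_eq_zero hx hpolar
  calc 3 • (x * y * x * z * x)
      = 3 • (x * y * x * z * x) + (x * x * (y * z) * x + x * (y * z) * (x * x))
          + (x * x * y * x + x * y * (x * x)) * z
          + y * (x * x * z * x + x * z * (x * x)) := by
        simp only [hcancel, zero_mul, mul_zero, add_zero]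
    _ = (x * x * y + x * y * x + y * (x * x)) * (z * x)
          + x * y * (x * x * z + x * z * x + z * (x * x))
          + (x * x * (y * x * z) + x * (y * x * z) * x + y * x * z * (x * x)) := by
        simp only [mul_add, add_mul, mul_assoc]
        abel
    _ = 0 := by simp only [hpolar, zero_mul, mul_zero, add_zero]

end NonUnitalSemiring

section NonUnitalRing

variable {A : Type*} [NonUnitalRing A]

theorem two_nsmul_polarized_cube_eq_zero (h : ∀ x : A, x * x * x = 0) (a b : A) :
    2 • (a * a * b + a * b * a + b * (a * a)) = 0 :=
  calc 2 • (a * a * b + a * b * a + b * (a * a))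
      = (b + a) * (b + a) * (b + a) + (b - a) * (b - a) * (b - a) - 2 • (b * b * b) := by
        simp only [mul_add, add_mul, mul_sub, sub_mul, mul_assoc]
        abel
    _ = 0 := by simp only [h, smul_zero, add_zero, sub_zero]

theorem stmt_13_general (h2 : IsSMulRegular A (2 : ℕ)) (h3 : IsSMulRegular A (3 : ℕ))
    (h : ∀ x : A, x * x * x = 0) (x y z : A) : x * y * x * z * x = 0 := by
  have hpolar (b : A) : x * x * b + x * b * x + b * (x * x) = 0 :=
    h2.right_eq_zero_of_smul (two_nsmul_polarized_cube_eq_zero h x b)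
  exact h3.right_eq_zero_of_smul (three_nsmul_mul_mul_mul_mul_eq_zero (h x) hpolar y z)

end NonUnitalRing

/-- Let `K` be a field of characteristic zero and `A` an associative (not necessarily
unital) `K`-algebra satisfying `x³ = 0`. Then `xyxzx = 0` for all `x, y, z ∈ A`. -/
theorem stmt_13 (K : Type*) [Field K] [CharZero K]
    (A : Type*) [NonUnitalRing A] [Module K A] [SMulCommClass K A A] [IsScalarTower K A A]
    (h : ∀ x : A, x * x * x = 0) :
    ∀ x y z : A, x * y * x * z * x = 0 := by
  have : IsAddTorsionFree A := .of_isTorsionFree K A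
  exact stmt_13_general (nsmul_right_injective two_ne_zero) (nsmul_right_injective three_ne_zero) h
end

section
/- Let K be a field of characteristic zero and let A be an associative (not necessarily unital) K-algebra satisfying x³ = 0 for all x ∈ A. Then x²zy² = 0 for all x, y, z ∈ A. -/
/-! The derivative `D x y = x²y + xyx + yx²` of the cube satisfies, for all `x, y, z`,
`D y (x²z) + x · D y (xz) + x² · D y z = 3 x²zy² + D x y · zy + D x (y²) · z`.
If all cubes vanish then so does `2 D`, by polarization, which leaves `6 x²zy² = 0`. -/

/-- The derivative of the cube `x ↦ x³` at `x` in the direction `y`, that is the part of `(x + y)³`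
that is linear in `y`. Squares are written as products because the ring need not have a unit. -/
def cubeDeriv {A : Type*} [NonUnitalNonAssocSemiring A] (x y : A) : A :=
  x * x * y + x * y * x + y * x * x

theorem cubeDeriv_add_add_eq_three_nsmul_add {A : Type*} [NonUnitalSemiring A] (x y z : A) :
    cubeDeriv y (x * x * z) + x * cubeDeriv y (x * z) + x * x * cubeDeriv y z =
      3 • (x * x * z * (y * y)) + cubeDeriv x y * (z * y) + cubeDeriv x (y * y) * z := by
  simp only [cubeDeriv, mul_add, add_mul, mul_assoc]
  abel

section NonUnitalRing

variable {A : Type*} [NonUnitalRing A]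

theorem cube_add_add_cube_sub (x y : A) :
    (y + x) * (y + x) * (y + x) + (y - x) * (y - x) * (y - x) =
      2 • (y * y * y) + 2 • cubeDeriv x y := by
  simp only [cubeDeriv, mul_add, add_mul, mul_sub, sub_mul, mul_assoc]
  abel

theorem two_nsmul_cubeDeriv_eq_zero (h : ∀ x : A, x * x * x = 0) (x y : A) :
    2 • cubeDeriv x y = 0 := by
  simpa only [h, zero_add, smul_zero] using (cube_add_add_cube_sub x y).symm

theorem stmt_14_general (h : ∀ x : A, x * x * x = 0) (x y z : A) :
    6 • (x * x * z * (y * y)) = 0 := by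
  have doubled : 2 • cubeDeriv y (x * x * z) + x * (2 • cubeDeriv y (x * z)) +
      x * x * (2 • cubeDeriv y z) =
      6 • (x * x * z * (y * y)) + 2 • cubeDeriv x y * (z * y) + 2 • cubeDeriv x (y * y) * z := by
    simpa only [smul_add, mul_smul_comm, smul_mul_assoc, smul_smul, Nat.reduceMul] using
      congrArg ((2 : ℕ) • ·) (cubeDeriv_add_add_eq_three_nsmul_add x y z)
  simpa only [two_nsmul_cubeDeriv_eq_zero h, mul_zero, zero_mul, add_zero] using doubled.symm

end NonUnitalRing

/-- Let `K` be a field of characteristic zero and `A` an associative (not necessarily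
unital) `K`-algebra satisfying `x³ = 0`. Then `x²zy² = 0` for all `x, y, z ∈ A`. -/
theorem stmt_14 (K : Type*) [Field K] [CharZero K]
    (A : Type*) [NonUnitalRing A] [Module K A] [SMulCommClass K A A] [IsScalarTower K A A]
    (h : ∀ x : A, x * x * x = 0) :
    ∀ x y z : A, x * x * z * (y * y) = 0 := by
  have := IsAddTorsionFree.of_isTorsionFree K A
  exact fun x y z ↦ (nsmul_eq_zero_iff_right (by decide)).mp (stmt_14_general h x y z)
end

section
/- Let K be a field of characteristic zero and let A be an associative (not necessarily unital) K-algebra satisfying x³ = 0 for all x ∈ A. Then for all x, y, z, t ∈ A one has x²·S₃(y,z,t) + S₃(y,z,t)·x² = 0, where S₃(y,z,t) = yzt + zty + tyz − zyt − ytz − tzy. -/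
/-!
Write `q = x²` and `S = S₃(y, z, t)`, let `Alt` denote the alternating sum over `y, z, t`, and put
`I = Alt (y q z t + y z q t)`. Polarizing `x³ = 0` shows that the sum of the products of `a, b, c`
in all six orders vanishes; for `a = b = x` this reads `x w x = -(q w + w q)` up to `2`-torsion.

Alternating the polarized identity at `(q, y, z t)` gives `I = -2 (q S + S q)`.
Alternating it at `(y, x z, t x)` gives
`Alt (y x z t x + x y z x t + y x z x t) = x S x + I`.
Eliminating all factors `x w x` turns the left side into `-(q S + S q) - 2 I` and the right side
into `-(q S + S q) + I`, so `3 I = 0` and therefore `6 (q S + S q) = 0`, again up to `2`-torsion.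
-/

/-- The signed sum of `f` over the six orderings of its three arguments, used to antisymmetrize
identities of a ring. Unlike in `MultilinearMap.alternatization`, `f` is a plain function, so that
ring words can be written out directly. -/
def alternatingSum {α M : Type*} [AddCommGroup M] (f : α → α → α → M) (a b c : α) : M :=
  f a b c + f b c a + f c a b - f b a c - f a c b - f c b a

lemma alternatingSum_eq_zero {α M : Type*} [AddCommGroup M] {f : α → α → α → M}
    (hf : ∀ a b c, f a b c = 0) (a b c : α) : alternatingSum f a b c = 0 := by
  simp only [alternatingSum, hf, add_zero, sub_zero]

section NonUnitalRing

variable {A : Type*} [NonUnitalRing A]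

/-- The standard polynomial `S₃` of degree three. -/
def standardPolynomialThree : A → A → A → A :=
  alternatingSum fun a b c => a * b * c

/-- The sum of the two polynomials obtained from `S₃` by inserting `q` at one of the two interior
places of every monomial. It links `S₃` to `q * S₃ + S₃ * q`. -/
def standardPolynomialThreeInsert (q : A) : A → A → A → A :=
  alternatingSum fun a b c => a * q * b * c + a * b * q * c

lemma sum_perm_mul_eq_zero_of_cube_eq_zero (h : ∀ x : A, x * x * x = 0) (a b c : A) :
    a * b * c + a * c * b + b * a * c + b * c * a + c * a * b + c * b * a = 0 := by
  linear_combination (norm := noncomm_ring)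
    h (a + b + c) - h (a + b) - h (a + c) - h (b + c) + h a + h b + h c

lemma two_nsmul_mul_self_mul_add_eq_zero_of_cube_eq_zero (h : ∀ x : A, x * x * x = 0)
    (x w : A) :
    2 • (x * x * w + x * w * x + w * (x * x)) = 0 := by
  linear_combination (norm := noncomm_ring) sum_perm_mul_eq_zero_of_cube_eq_zero h x x w

lemma standardPolynomialThreeInsert_eq_of_cube_eq_zero (h : ∀ x : A, x * x * x = 0)
    (q y z t : A) :
    standardPolynomialThreeInsert q y z t =
      -(2 • (q * standardPolynomialThree y z t + standardPolynomialThree y z t * q)) := by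
  have polarized := alternatingSum_eq_zero
    (fun a b c => sum_perm_mul_eq_zero_of_cube_eq_zero h q a (b * c)) y z t
  simp only [standardPolynomialThreeInsert, standardPolynomialThree, alternatingSum]
    at polarized ⊢
  linear_combination (norm := noncomm_ring) polarized

lemma six_nsmul_standardPolynomialThreeInsert_eq_zero_of_cube_eq_zero
    (h : ∀ x : A, x * x * x = 0) (x y z t : A) :
    6 • standardPolynomialThreeInsert (x * x) y z t = 0 := by
  have polarized := alternatingSum_eq_zero
    (fun a b c => sum_perm_mul_eq_zero_of_cube_eq_zero h a (x * b) (c * x)) y z t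
  have sandwich := two_nsmul_mul_self_mul_add_eq_zero_of_cube_eq_zero h x
  have sandwich_outer := sandwich (standardPolynomialThree y z t)
  have sandwich_inner := alternatingSum_eq_zero
    (f := fun a b c =>
      a * 2 • (x * x * (b * c) + x * (b * c) * x + b * c * (x * x)) +
      2 • (x * x * (a * b) + x * (a * b) * x + a * b * (x * x)) * c +
      a * 2 • (x * x * b + x * b * x + b * (x * x)) * c)
    (fun a b c => by simp only [sandwich, mul_zero, zero_mul, add_zero]) y z t
  simp only [standardPolynomialThreeInsert, standardPolynomialThree, alternatingSum]
    at polarized sandwich_outer sandwich_inner ⊢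
  linear_combination (norm := noncomm_ring) sandwich_inner - sandwich_outer - 2 • polarized

end NonUnitalRing

theorem stmt_15_general {A : Type*} [NonUnitalRing A] (h : ∀ x : A, x * x * x = 0)
    (x y z t : A) :
    12 • (x * x * (y * z * t + z * t * y + t * y * z - z * y * t - y * t * z - t * z * y) +
      (y * z * t + z * t * y + t * y * z - z * y * t - y * t * z - t * z * y) * (x * x)) = 0 := by
  change 12 • (x * x * standardPolynomialThree y z t +
    standardPolynomialThree y z t * (x * x)) = 0
  have insert := standardPolynomialThreeInsert_eq_of_cube_eq_zero h (x * x) y z t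
  have six_insert := six_nsmul_standardPolynomialThreeInsert_eq_zero_of_cube_eq_zero h x y z t
  linear_combination (norm := module) 6 • insert - six_insert

/-- Let `K` be a field of characteristic zero and `A` an associative (not necessarily
unital) `K`-algebra satisfying `x³ = 0`. Then `x²·S₃(y,z,t) + S₃(y,z,t)·x² = 0` for all
`x, y, z, t ∈ A`, where `S₃(y,z,t) = yzt + zty + tyz - zyt - ytz - tzy`. -/
theorem stmt_15 (K : Type*) [Field K] [CharZero K]
    (A : Type*) [NonUnitalRing A] [Module K A] [SMulCommClass K A A] [IsScalarTower K A A]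
    (h : ∀ x : A, x * x * x = 0) :
    ∀ x y z t : A,
      x * x * (y * z * t + z * t * y + t * y * z - z * y * t - y * t * z - t * z * y) +
        (y * z * t + z * t * y + t * y * z - z * y * t - y * t * z - t * z * y) * (x * x)
      = 0 := by
  intro x y z t
  have twelve_ne_zero : (12 : K) ≠ 0 := by norm_num
  have twelve_smul := stmt_15_general h x y z t
  rw [← ofNat_smul_eq_nsmul K] at twelve_smul
  exact (smul_eq_zero.mp twelve_smul).resolve_left twelve_ne_zero
end

section
/- Let K be a field of characteristic zero and let A be an associative (not necessarily unital) K-algebra satisfying x³ = 0 for all x ∈ A. Then A satisfies the standard identity of degree 5: S₅(x₁,x₂,x₃,x₄,x₅) = Σ_{σ∈S₅} sign(σ)·x_{σ(1)}x_{σ(2)}x_{σ(3)}x_{σ(4)}x_{σ(5)} = 0 for all x₁,…,x₅ ∈ A. -/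
/-!
Polarizing `aⁿ = 0` gives `∑ τ, y (τ 1) * ⋯ * y (τ n) = 0`, the sum running over all permutations
`τ` of `n` factors. Substitute for the `y i` a single letter and `n - 1` products of two letters
each, and antisymmetrize over the `2 * n - 1` letters. Permuting blocks of which at most one has
odd length is an even permutation of the letters, so each of the `n !` values of `τ` contributes
the same standard polynomial, and `n ! • S_{2n-1} = 0`. The case `n = 3` is the theorem.
-/

open Equiv Finset
open scoped Nat

section Polarization

variable {ι : Type*} [Fintype ι] [DecidableEq ι]

theorem sum_perm_eq_sum_filter_surjective {N : Type*} [AddCommMonoid N] (g : (ι → ι) → N) :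
    ∑ τ : Perm ι, g τ = ∑ r with Function.Surjective r, g r := by
  refine Finset.sum_bij (fun τ _ => τ) (by simp [Equiv.surjective])
    (fun _ _ _ _ => DFunLike.coe_injective.eq_iff.mp) (fun r hr => ?_) (fun _ _ => rfl)
  have hr' : Function.Surjective r := by simpa using hr
  exact ⟨.ofBijective r ⟨Finite.injective_iff_surjective.mpr hr', hr'⟩, by simp, rfl⟩

-- Inclusion-exclusion over the values that a map `ι → ι` avoids.
theorem sum_perm_multilinear_eq_sum_finset {R M N : Type*} [Semiring R] [AddCommMonoid M]
    [Module R M] [AddCommGroup N] [Module R N] (f : MultilinearMap R (fun _ : ι => M) N)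
    (y : ι → M) :
    ∑ τ : Perm ι, f (y ∘ τ) =
      ∑ t : Finset ι, (-1 : ℤ) ^ #t • f (fun _ => ∑ i ∈ tᶜ, y i) := by
  let avoiding (i : ι) : Finset (ι → ι) := {r | i ∉ Set.range r}
  have inf_compl : univ.inf (fun i => (avoiding i)ᶜ) = ({r | r.Surjective} : Finset (ι → ι)) := by
    ext r
    simp only [avoiding, Finset.mem_inf, mem_univ, mem_compl, mem_filter_univ, forall_const,
      not_not, Set.mem_range]
    rfl
  have inf_avoiding (t : Finset ι) : t.inf avoiding = Fintype.piFinset fun _ : ι => tᶜ := by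
    ext r
    simp only [avoiding, Finset.mem_inf, Fintype.mem_piFinset, mem_filter_univ, mem_compl,
      Set.mem_range]
    grind
  rw [sum_perm_eq_sum_filter_surjective fun r => f (y ∘ r), ← inf_compl,
    inclusion_exclusion_sum_inf_compl, powerset_univ]
  simp only [inf_avoiding, f.map_sum_finset, Function.comp_def]

theorem sum_perm_prod_ofFn_eq_zero {R : Type*} [Ring R] {n : ℕ} {y : Fin n → R}
    (hy : ∀ s : Finset (Fin n), (∑ i ∈ s, y i) ^ n = 0) :
    ∑ τ : Perm (Fin n), (List.ofFn (y ∘ τ)).prod = 0 := by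
  have := sum_perm_multilinear_eq_sum_finset (MultilinearMap.mkPiAlgebraFin ℤ n R) y
  simpa [hy] using this

end Polarization

section AltWord

variable {ι R : Type*} [Fintype ι] [DecidableEq ι] [Ring R]

/-- The word `l` in the letters `x i`, antisymmetrized over all permutations of the alphabet `ι`.
Taking for `l` a list of all the letters gives the standard polynomial. -/
def altWord (x : ι → R) (l : List ι) : R :=
  ∑ σ : Perm ι, (Perm.sign σ : ℤ) • (l.map (x ∘ σ)).prod

variable (x : ι → R)

theorem altWord_map_perm (τ : Perm ι) (l : List ι) :
    altWord x (l.map τ) = (Perm.sign τ : ℤ) • altWord x l := by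
  unfold altWord
  rw [← Equiv.sum_comp (Equiv.mulRight τ⁻¹), Finset.smul_sum]
  simp [Function.comp_def, smul_smul, mul_comm, -zsmul_eq_mul]

theorem altWord_swap {p q : List ι} {i j : ι} (h : (p ++ i :: j :: q).Nodup) :
    altWord x (p ++ j :: i :: q) = -altWord x (p ++ i :: j :: q) := by
  have fixes {l : List ι} (hi : i ∉ l) (hj : j ∉ l) : l.map (Equiv.swap i j) = l :=
    (List.map_congr_left fun k hk => swap_apply_of_ne_of_ne (by grind) (by grind)).trans l.map_id
  have hmap : (p ++ i :: j :: q).map (Equiv.swap i j) = p ++ j :: i :: q := by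
    simp [fixes (l := p) (by grind) (by grind), fixes (l := q) (by grind) (by grind)]
  rw [← hmap, altWord_map_perm, Perm.sign_swap (by grind)]
  simp

theorem altWord_move_letter {p b q : List ι} {i : ι} (h : (p ++ i :: (b ++ q)).Nodup) :
    altWord x (p ++ b ++ i :: q) = (-1 : ℤ) ^ b.length • altWord x (p ++ i :: (b ++ q)) := by
  induction b generalizing p with
  | nil => simp
  | cons j b ih =>
    have move := ih (p := p ++ [j]) (by grind)
    have swap := altWord_swap x (p := p) (q := b ++ q) (i := i) (j := j) (by grind)
    simp only [List.append_assoc, List.cons_append, List.nil_append] at move swap ⊢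
    rw [move, swap, List.length_cons, pow_succ, mul_neg_one, neg_smul, smul_neg]

theorem altWord_append_comm {p a b q : List ι} (h : (p ++ (a ++ (b ++ q))).Nodup) :
    altWord x (p ++ (b ++ (a ++ q))) =
      (-1 : ℤ) ^ (a.length * b.length) • altWord x (p ++ (a ++ (b ++ q))) := by
  induction a generalizing p with
  | nil => simp
  | cons i a ih =>
    have move := altWord_move_letter x (p := p) (b := b) (q := a ++ q) (i := i)
      ((((List.perm_append_comm_assoc a b q).cons i).append_left p).nodup h)
    have comm := ih (p := p ++ [i]) (by simpa using h)
    simp only [List.append_assoc, List.cons_append, List.nil_append] at move comm ⊢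
    rw [move, comm, smul_smul, ← pow_add, List.length_cons, Nat.succ_mul, add_comm]

theorem altWord_flatten_perm {L L' : List (List ι)} (hL : L.Perm L') (hnodup : L.flatten.Nodup)
    (heven : L.Pairwise fun a b => Even (a.length * b.length)) :
    altWord x L'.flatten = altWord x L.flatten := by
  suffices ∀ p, (p ++ L.flatten).Nodup → altWord x (p ++ L'.flatten) = altWord x (p ++ L.flatten)
    from this [] hnodup
  clear hnodup
  induction hL with
  | nil => simp
  | cons a _ ih =>
    intro p hp
    simpa using ih heven.of_cons (p ++ a) (by simpa using hp)
  | swap a b L =>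
    intro p hp
    have hba : Even (b.length * a.length) := List.rel_of_pairwise_cons heven (by simp)
    simpa [hba.neg_one_pow] using altWord_append_comm x hp
  | trans hL₁ _ ih₁ ih₂ =>
    intro p hp
    have heven₂ := hL₁.pairwise heven fun h => by rwa [mul_comm]
    rw [ih₂ heven₂ p ((hL₁.flatten.append_left p).nodup hp), ih₁ heven p hp]

end AltWord

theorem list_prod_mem_of_ne_nil {M B : Type*} [Monoid M] [SetLike B M] [MulMemClass B M] {S : B}
    {l : List M} (hne : l ≠ []) (hl : ∀ a ∈ l, a ∈ S) : l.prod ∈ S := by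
  induction l with
  | nil => exact absurd rfl hne
  | cons a l ih =>
    obtain rfl | hl_ne := eq_or_ne l []
    · simpa using hl
    · rw [List.prod_cons]
      exact mul_mem (hl a (by simp)) (ih hl_ne fun b hb => hl b (by simp [hb]))

theorem factorial_smul_altWord_flatten_eq_zero {ι R : Type*} [Fintype ι] [DecidableEq ι] [Ring R]
    {S : NonUnitalSubring R} {k : ℕ} (hS : ∀ a ∈ S, a ^ k = 0) {x : ι → R} (hx : ∀ i, x i ∈ S)
    {B : Fin k → List ι} (hne : ∀ i, B i ≠ []) (hnodup : (List.ofFn B).flatten.Nodup)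
    (heven : (List.ofFn B).Pairwise fun a b => Even (a.length * b.length)) :
    k ! • altWord x (List.ofFn B).flatten = 0 := by
  have polarized (σ : Perm ι) :
      ∑ τ : Perm (Fin k), ((List.ofFn (B ∘ τ)).flatten.map (x ∘ σ)).prod = 0 := by
    have block_mem (i : Fin k) : ((B i).map (x ∘ σ)).prod ∈ S :=
      list_prod_mem_of_ne_nil (by simpa using hne i) (by simp [hx])
    have := sum_perm_prod_ofFn_eq_zero (y := fun i => ((B i).map (x ∘ σ)).prod)
      fun s => hS _ (sum_mem fun i _ => block_mem i)
    simpa [List.map_flatten, List.prod_flatten, List.map_ofFn, Function.comp_def] using this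
  calc k ! • altWord x (List.ofFn B).flatten
      = ∑ τ : Perm (Fin k), altWord x (List.ofFn (B ∘ τ)).flatten := by
        simp only [altWord_flatten_perm x (Equiv.Perm.ofFn_comp_perm _ B).symm hnodup heven,
          sum_const, card_univ, Fintype.card_perm, Fintype.card_fin]
    _ = ∑ σ : Perm ι, (Perm.sign σ : ℤ) •
          ∑ τ : Perm (Fin k), ((List.ofFn (B ∘ τ)).flatten.map (x ∘ σ)).prod := by
        simp only [altWord, Finset.smul_sum]
        exact Finset.sum_comm
    _ = 0 := by simp only [polarized, smul_zero, sum_const_zero]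

section StdPoly

theorem map_prodTuple_s16 {A M F : Type*} [Mul A] [Monoid M] [FunLike F A M] [MulHomClass F A M]
    (f : F) {n : ℕ} (x : Fin (n + 1) → A) :
    f (prodTuple x) = (List.ofFn (f ∘ x)).prod := by
  have map_foldl (l : List A) (a : A) : f (l.foldl (· * ·) a) = f a * (l.map f).prod := by
    induction l generalizing a with
    | nil => simp
    | cons b l ih => simp [ih, mul_assoc]
  simp [prodTuple, map_foldl, List.ofFn_succ, List.map_ofFn, Function.comp_def]

variable {A R F : Type*} [NonUnitalRing A] [Ring R] [FunLike F A R] [NonUnitalRingHomClass F A R]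

theorem map_stdPoly_s16 (f : F) {n : ℕ} (x : Fin (n + 1) → A) :
    f (stdPoly x) = altWord (f ∘ x) (List.finRange (n + 1)) := by
  simp only [stdPoly, altWord, map_sum, map_zsmul, map_prodTuple_s16, List.ofFn_eq_map,
    Function.comp_assoc]

/-- The partition of the word `0, 1, …, 2n` into the consecutive blocks
`[0], [1, 2], …, [2n-1, 2n]`, of which only one has odd length. -/
def pairBlocks (n : ℕ) : Fin (n + 1) → List (Fin (2 * n + 1)) :=
  Fin.cons [0] fun i => [⟨2 * i + 1, by omega⟩, ⟨2 * i + 2, by omega⟩]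

theorem pairBlocks_ne_nil (n : ℕ) (i : Fin (n + 1)) : pairBlocks n i ≠ [] := by
  cases i using Fin.cases <;> simp [pairBlocks]

theorem flatten_ofFn_pairBlocks (n : ℕ) :
    (List.ofFn (pairBlocks n)).flatten = List.finRange (2 * n + 1) := by
  rw [List.finRange_succ, ← List.ofFn_eq_map, List.ofFn_mul']
  simp [pairBlocks, List.ofFn_succ]

theorem pairwise_even_pairBlocks (n : ℕ) :
    (List.ofFn (pairBlocks n)).Pairwise fun a b => Even (a.length * b.length) := by
  simp [pairBlocks, List.ofFn_succ, List.pairwise_ofFn, show Even 4 by decide]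

theorem factorial_smul_map_stdPoly_eq_zero {n : ℕ}
    (h : ∀ a : A, prodTuple (fun _ : Fin (n + 1) => a) = 0) (f : F)
    (x : Fin (2 * n + 1) → A) : (n + 1)! • f (stdPoly x) = 0 := by
  have nil_range : ∀ a ∈ (f : A →ₙ+* R).range, a ^ (n + 1) = 0 := by
    rintro _ ⟨a, rfl⟩
    have := map_prodTuple_s16 f fun _ : Fin (n + 1) => a
    rwa [h, map_zero, Function.comp_def, List.ofFn_const, List.prod_replicate, eq_comm] at this
  rw [map_stdPoly_s16, ← flatten_ofFn_pairBlocks]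
  exact factorial_smul_altWord_flatten_eq_zero nil_range (fun i => ⟨x i, rfl⟩)
    (pairBlocks_ne_nil n)
    (by simpa only [flatten_ofFn_pairBlocks] using List.nodup_finRange _)
    (pairwise_even_pairBlocks n)

theorem stmt_16_general {n : ℕ} (h : ∀ a : A, prodTuple (fun _ : Fin (n + 1) => a) = 0)
    (x : Fin (2 * n + 1) → A) : (n + 1)! • stdPoly x = 0 := by
  let f := Unitization.inrNonUnitalAlgHom ℤ A
  have hf : Function.Injective f := Unitization.inr_injective
  apply hf
  rw [map_nsmul, map_zero]
  exact factorial_smul_map_stdPoly_eq_zero h f x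

end StdPoly

/-- Let `K` be a field of characteristic zero and `A` an associative (not necessarily
unital) `K`-algebra satisfying `x³ = 0`. Then `A` satisfies the standard identity of
degree 5: `S₅(x₁,…,x₅) = 0`. -/
theorem stmt_16 (K : Type*) [Field K] [CharZero K]
    (A : Type*) [NonUnitalRing A] [Module K A] [SMulCommClass K A A] [IsScalarTower K A A]
    (h : ∀ x : A, x * x * x = 0) :
    ∀ x : Fin 5 → A, stdPoly x = 0 := by
  intro x
  have : IsAddTorsionFree A := .of_isTorsionFree K A
  exact (smul_eq_zero_iff_right (Nat.factorial_ne_zero 3)).mp (stmt_16_general (n := 2) h x)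
end

section
/- Let K be a field of characteristic zero and let A be an associative (not necessarily unital) K-algebra satisfying x³ = 0 for all x ∈ A and the standard identity of degree 4, S₄(x₁,x₂,x₃,x₄) = Σ_{σ∈S₄} sign(σ)·x_{σ(1)}x_{σ(2)}x_{σ(3)}x_{σ(4)} = 0 for all x₁,…,x₄ ∈ A. Then x(yz − zy)x² = 0 for all x, y, z ∈ A. -/
/-!
Polarizing `x³ = 0` gives `x²w + xwx + wx² = 0` for all `w`. Up to 3-torsion this makes every
word `xyxzx` vanish, and then each nonzero word of `S₄(x, x², y, z)` in which `y` precedes `z` is,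
up to sign, `xyzx²`; likewise with `y` and `z` exchanged. Collecting the signs yields
`S₄(x, x², y, z) = 6 x(yz - zy)x²`.
-/

theorem prodTuple_succ {S : Type*} [Semigroup S] {n : ℕ} (x : Fin (n + 2) → S) :
    prodTuple x = x 0 * prodTuple (x ∘ Fin.succ) := by
  simp only [prodTuple, List.ofFn_succ, List.foldl_cons, List.foldl_assoc, Function.comp_apply]

/-- The permutation of `{0, …, n}` with `0 ↦ i` whose other values are those of `τ`, relabelled
by the increasing bijection from `{0, …, n - 1}` onto the complement of `i`.
Summing over `i` and `τ` expands `stdPoly` along its first letter. -/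
def permCons {n : ℕ} (i : Fin (n + 1)) (τ : Equiv.Perm (Fin n)) : Equiv.Perm (Fin (n + 1)) :=
  i.cycleRange⁻¹ * Equiv.Perm.decomposeFin.symm (0, τ)

section permCons

variable {n : ℕ}

theorem permCons_zero (i : Fin (n + 1)) (τ : Equiv.Perm (Fin n)) : permCons i τ 0 = i := by
  simp [permCons, Equiv.Perm.inv_def]

theorem permCons_succ (i : Fin (n + 1)) (τ : Equiv.Perm (Fin n)) (j : Fin n) :
    permCons i τ j.succ = i.succAbove (τ j) := by
  simp [permCons]

theorem sign_permCons (i : Fin (n + 1)) (τ : Equiv.Perm (Fin n)) :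
    Equiv.Perm.sign (permCons i τ) = (-1) ^ (i : ℕ) * Equiv.Perm.sign τ := by
  simp [permCons, Equiv.Perm.decomposeFin.symm_sign]

theorem permCons_bijective :
    Function.Bijective fun p : Fin (n + 1) × Equiv.Perm (Fin n) => permCons p.1 p.2 := by
  refine (Fintype.bijective_iff_injective_and_card _).2 ⟨?_, ?_⟩
  · rintro ⟨i, τ⟩ ⟨i', τ'⟩ h
    obtain rfl : i = i' := by simpa only [permCons_zero] using DFunLike.congr_fun h 0
    have tail_eq (j : Fin n) : τ j = τ' j := by
      simpa only [permCons_succ, Fin.succAbove_right_inj] using DFunLike.congr_fun h j.succ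
    rw [Equiv.ext tail_eq]
  · simp [Fintype.card_perm, Nat.factorial_succ]

end permCons

section StandardPolynomial

variable {A : Type*} [NonUnitalRing A]

theorem stdPoly_one (x : Fin 1 → A) : stdPoly x = x 0 := by
  simp [stdPoly, prodTuple]

theorem stdPoly_succ {n : ℕ} (x : Fin (n + 2) → A) :
    stdPoly x = ∑ i : Fin (n + 2), (-1 : ℤ) ^ (i : ℕ) • (x i * stdPoly (x ∘ i.succAbove)) := by
  have word (i : Fin (n + 2)) (τ : Equiv.Perm (Fin (n + 1))) :
      prodTuple (x ∘ permCons i τ) = x i * prodTuple (x ∘ i.succAbove ∘ τ) := by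
    rw [prodTuple_succ, Function.comp_apply, permCons_zero]
    simp only [Function.comp_def, permCons_succ]
  rw [stdPoly, ← permCons_bijective.sum_comp, Fintype.sum_prod_type]
  simp [word, sign_permCons, stdPoly, Finset.mul_sum, Finset.smul_sum, mul_smul, mul_smul_comm,
    Function.comp_assoc]

theorem stdPoly_two (x : Fin 2 → A) : stdPoly x = ⁅x 0, x 1⁆ := by
  simp [stdPoly_succ, stdPoly_one, Fin.succAbove, Ring.lie_def, sub_eq_add_neg]

theorem stdPoly_three (x : Fin 3 → A) :
    stdPoly x = x 0 * ⁅x 1, x 2⁆ - x 1 * ⁅x 0, x 2⁆ + x 2 * ⁅x 0, x 1⁆ := by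
  simp [stdPoly_succ x, Fin.sum_univ_three, stdPoly_two, Fin.succAbove, sub_eq_add_neg]

theorem stdPoly_four (x : Fin 4 → A) :
    stdPoly x =
      (⁅x 0, x 1⁆ * ⁅x 2, x 3⁆ + ⁅x 2, x 3⁆ * ⁅x 0, x 1⁆)
        - (⁅x 0, x 2⁆ * ⁅x 1, x 3⁆ + ⁅x 1, x 3⁆ * ⁅x 0, x 2⁆)
        + (⁅x 0, x 3⁆ * ⁅x 1, x 2⁆ + ⁅x 1, x 2⁆ * ⁅x 0, x 3⁆) := by
  calc stdPoly x
      = x 0 * (x 1 * ⁅x 2, x 3⁆ - x 2 * ⁅x 1, x 3⁆ + x 3 * ⁅x 1, x 2⁆)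
        - x 1 * (x 0 * ⁅x 2, x 3⁆ - x 2 * ⁅x 0, x 3⁆ + x 3 * ⁅x 0, x 2⁆)
        + x 2 * (x 0 * ⁅x 1, x 3⁆ - x 1 * ⁅x 0, x 3⁆ + x 3 * ⁅x 0, x 1⁆)
        - x 3 * (x 0 * ⁅x 1, x 2⁆ - x 1 * ⁅x 0, x 2⁆ + x 2 * ⁅x 0, x 1⁆) := by
        simp [stdPoly_succ x, Fin.sum_univ_four, stdPoly_three, Fin.succAbove, sub_eq_add_neg]
    _ = _ := by
        simp only [Ring.lie_def]
        noncomm_ring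

end StandardPolynomial

/-- The polarization `x²w + xwx + wx²` of the cube vanishes at `x`, in every direction `w`. This
is what the identity `x³ = 0` provides for a single element `x`. -/
def PolarCubeVanishes {A : Type*} [NonUnitalRing A] (x : A) : Prop :=
  ∀ w, x * x * w + x * w * x + w * (x * x) = 0

theorem polarCubeVanishes_of_cube_eq_zero {A : Type*} [NonUnitalRing A]
    (h2 : IsSMulRegular A (2 : ℕ)) (hcube : ∀ a : A, a * a * a = 0) (x : A) :
    PolarCubeVanishes x := by
  intro w
  refine h2.right_eq_zero_of_smul ?_
  calc 2 • (x * x * w + x * w * x + w * (x * x))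
      = (x + w) * (x + w) * (x + w) - (x - w) * (x - w) * (x - w) - 2 • (w * w * w) := by
        noncomm_ring
    _ = 0 := by simp only [hcube, smul_zero, sub_zero]

namespace PolarCubeVanishes

variable {A : Type*} [NonUnitalRing A] {x : A}

theorem cube_eq_zero (hpol : PolarCubeVanishes x) (h3 : IsSMulRegular A (3 : ℕ)) :
    x * x * x = 0 := by
  refine h3.right_eq_zero_of_smul ?_
  linear_combination (norm := noncomm_ring) hpol x

theorem mul_mul_sq_eq_neg (hpol : PolarCubeVanishes x) (hx : x * x * x = 0) (w : A) :
    x * w * (x * x) = -(x * x * w * x) := by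
  linear_combination (norm := noncomm_ring) x * hpol w - hx * w

-- Polarizing at `y`, at `z` and at `yxz` gives three expressions for the same word, whose sum
-- is `0`.
theorem xyxzx_eq_zero (hpol : PolarCubeVanishes x) (h3 : IsSMulRegular A (3 : ℕ)) (y z : A) :
    x * y * x * z * x = 0 := by
  have anticomm := hpol.mul_mul_sq_eq_neg (hpol.cube_eq_zero h3)
  have polarize_y : x * y * x * z * x = x * y * z * (x * x) - y * (x * x) * z * x := by
    linear_combination (norm := noncomm_ring) hpol y * (z * x) - anticomm (y * z)
  have polarize_z : x * y * x * z * x = x * x * y * x * z - x * y * z * (x * x) := by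
    linear_combination (norm := noncomm_ring) x * y * hpol z - anticomm y * z
  have polarize_yxz : x * y * x * z * x = y * (x * x) * z * x - x * x * y * x * z := by
    linear_combination (norm := noncomm_ring) hpol (y * x * z) - y * anticomm z
  refine h3.right_eq_zero_of_smul ?_
  linear_combination (norm := noncomm_ring) polarize_y + polarize_z + polarize_yxz

theorem yxxzx_eq_xyzxx (hpol : PolarCubeVanishes x) (h3 : IsSMulRegular A (3 : ℕ)) (y z : A) :
    y * (x * x) * z * x = x * y * z * (x * x) := by
  have anticomm := hpol.mul_mul_sq_eq_neg (hpol.cube_eq_zero h3)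
  linear_combination (norm := noncomm_ring) hpol y * (z * x) - anticomm (y * z)
    - hpol.xyxzx_eq_zero h3 y z

theorem xxyxz_eq_xyzxx (hpol : PolarCubeVanishes x) (h3 : IsSMulRegular A (3 : ℕ)) (y z : A) :
    x * x * y * x * z = x * y * z * (x * x) := by
  have anticomm := hpol.mul_mul_sq_eq_neg (hpol.cube_eq_zero h3)
  linear_combination (norm := noncomm_ring) anticomm y * z - x * y * hpol z
    + hpol.xyxzx_eq_zero h3 y z

theorem lie_mul_lie_sq_add_lie_sq_mul_lie (hpol : PolarCubeVanishes x)
    (h3 : IsSMulRegular A (3 : ℕ)) (y z : A) :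
    ⁅x, y⁆ * ⁅x * x, z⁆ + ⁅x * x, z⁆ * ⁅x, y⁆ = -(3 • (x * ⁅y, z⁆ * (x * x))) := by
  have hx := hpol.cube_eq_zero h3
  have anticomm := hpol.mul_mul_sq_eq_neg hx
  have word_xyxxz : x * y * (x * x) * z = -(x * y * z * (x * x)) := by
    rw [anticomm, neg_mul, hpol.xxyxz_eq_xyzxx h3]
  have word_yxzxx : y * x * z * (x * x) = -(x * y * z * (x * x)) := by
    linear_combination (norm := noncomm_ring) y * anticomm z - hpol.yxxzx_eq_xyzxx h3 y z
  have word_xxzyx : x * x * z * y * x = -(x * z * y * (x * x)) := by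
    linear_combination (norm := noncomm_ring) anticomm (z * y)
  calc ⁅x, y⁆ * ⁅x * x, z⁆ + ⁅x * x, z⁆ * ⁅x, y⁆
      = x * y * (x * x) * z - x * y * z * (x * x) + y * x * z * (x * x)
        + x * x * z * x * y - x * x * z * y * x + z * (x * x) * y * x := by
        simp only [Ring.lie_def]
        linear_combination (norm := noncomm_ring) -(y * hx * z) - z * hx * y
    _ = -(3 • (x * y * z * (x * x))) + 3 • (x * z * y * (x * x)) := by
        rw [word_xyxxz, word_yxzxx, word_xxzyx, hpol.xxyxz_eq_xyzxx h3 z y,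
          hpol.yxxzx_eq_xyzxx h3 z y]
        abel
    _ = -(3 • (x * ⁅y, z⁆ * (x * x))) := by
        simp only [Ring.lie_def]
        noncomm_ring

theorem stdPoly_self_sq (hpol : PolarCubeVanishes x) (h3 : IsSMulRegular A (3 : ℕ)) (y z : A) :
    stdPoly ![x, x * x, y, z] = 6 • (x * ⁅y, z⁆ * (x * x)) := by
  have lie_self_sq : ⁅x, x * x⁆ = 0 := by rw [Ring.lie_def, mul_assoc, sub_self]
  calc stdPoly ![x, x * x, y, z]
      = (⁅x, x * x⁆ * ⁅y, z⁆ + ⁅y, z⁆ * ⁅x, x * x⁆)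
        - (⁅x, y⁆ * ⁅x * x, z⁆ + ⁅x * x, z⁆ * ⁅x, y⁆)
        + (⁅x, z⁆ * ⁅x * x, y⁆ + ⁅x * x, y⁆ * ⁅x, z⁆) := stdPoly_four _
    _ = 3 • (x * ⁅y, z⁆ * (x * x)) - 3 • (x * ⁅z, y⁆ * (x * x)) := by
        rw [lie_self_sq, hpol.lie_mul_lie_sq_add_lie_sq_mul_lie h3 y z,
          hpol.lie_mul_lie_sq_add_lie_sq_mul_lie h3 z y, zero_mul, mul_zero]
        abel
    _ = 6 • (x * ⁅y, z⁆ * (x * x)) := by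
        simp only [Ring.lie_def]
        noncomm_ring

end PolarCubeVanishes

theorem stmt_17_general {A : Type*} [NonUnitalRing A] (h6 : IsSMulRegular A (6 : ℕ))
    (h1 : ∀ x : A, x * x * x = 0) (h2 : ∀ x : Fin 4 → A, stdPoly x = 0) (x y z : A) :
    x * (y * z - z * y) * (x * x) = 0 := by
  have regular_two : IsSMulRegular A (2 : ℕ) := .of_mul (a := 3) h6
  have regular_three : IsSMulRegular A (3 : ℕ) := .of_mul (a := 2) h6
  have polar := polarCubeVanishes_of_cube_eq_zero regular_two h1 x
  refine h6.right_eq_zero_of_smul ?_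
  rw [← Ring.lie_def, ← polar.stdPoly_self_sq regular_three, h2]

/-- Let `K` be a field of characteristic zero and `A` an associative (not necessarily
unital) `K`-algebra satisfying `x³ = 0` and the standard identity of degree 4,
`S₄(x₁,…,x₄) = 0`. Then `x(yz - zy)x² = 0` for all `x, y, z ∈ A`. -/
theorem stmt_17 (K : Type*) [Field K] [CharZero K]
    (A : Type*) [NonUnitalRing A] [Module K A] [SMulCommClass K A A] [IsScalarTower K A A]
    (h1 : ∀ x : A, x * x * x = 0)
    (h2 : ∀ x : Fin 4 → A, stdPoly x = 0) :
    ∀ x y z : A, x * (y * z - z * y) * (x * x) = 0 := by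
  have : IsAddTorsionFree A := .of_isTorsionFree K A
  exact stmt_17_general (nsmul_right_injective (by norm_num)) h1 h2
end
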